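/- arXiv:2403.17079 — 2 statements merged into one kernel-verified Lean document; each statement's English description precedes it below -/
import Mathlib

section
/- Let (Q, m, k) be a commutative Noetherian local ring, let I ⊆ m be an ideal and set R = Q/I. Then for every finitely generated R-module M and every integer i ≥ 0 one has Σ_{p+q=i} β_p^R(M)·β_q^Q(k) ≤ Σ_{p+q=i} β_p^Q(M)·β_q^R(k). (This is Lescot's coefficient-wise inequality P_M^R(t)·P_k^Q(t) ≼ P_M^Q(t)·P_k^R(t).) -/
open CategoryTheory TensorProduct

/-- The `i`-th Betti number of a module `M` over a local ring `A`:
`β_i^A(M) = dim_k Tor_i^A(M, k)`, computed as the `k`-dimension of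
`k ⊗_A Tor_i^A(M, k)` (the two agree since `Tor_i^A(M, k)` is a `k`-vector
space, being annihilated by the maximal ideal of `A`). -/
noncomputable def bettiNumber (A : Type) [CommRing A] [IsLocalRing A]
    (M : Type) [AddCommGroup M] [Module A M] (i : ℕ) : ℕ :=
  Module.finrank (IsLocalRing.ResidueField A)
    (IsLocalRing.ResidueField A ⊗[A]
      (((Tor (ModuleCat A) i).obj (ModuleCat.of A M)).obj
        (ModuleCat.of A (IsLocalRing.ResidueField A))))

set_option linter.unusedSectionVars false

section basics
variable {A : Type} [CommRing A]

/-- length of the homology -/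
noncomputable def hlen (K : ChainComplex (ModuleCat.{0} A) ℕ) (n : ℕ) : ℕ∞ :=
  Module.length A (K.homology n)

lemma hlen_iso {K L : ChainComplex (ModuleCat.{0} A) ℕ} (e : K ≅ L) (n : ℕ) :
    hlen K n = hlen L n :=
  (((HomologicalComplex.homologyFunctor _ _ n).mapIso e).toLinearEquiv).length_eq

/-- cycles -/
def Zc (V : ℕ → Type) [∀ n, AddCommGroup (V n)] [∀ n, Module A (V n)]
    (d : ∀ n, V (n + 1) →ₗ[A] V n) : ∀ n, Submodule A (V n)
  | 0 => ⊤
  | n + 1 => LinearMap.ker (d n)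

/-- elementary homology -/
abbrev eH (V : ℕ → Type) [∀ n, AddCommGroup (V n)] [∀ n, Module A (V n)]
    (d : ∀ n, V (n + 1) →ₗ[A] V n) (n : ℕ) : Type :=
  Zc V d n ⧸ (LinearMap.range (d n)).submoduleOf (Zc V d n)

/-- bundled complex -/
noncomputable abbrev CC (V : ℕ → Type) [∀ n, AddCommGroup (V n)] [∀ n, Module A (V n)]
    (d : ∀ n, V (n + 1) →ₗ[A] V n) (h : ∀ n, d n ∘ₗ d (n + 1) = 0) :
    ChainComplex (ModuleCat.{0} A) ℕ :=
  ChainComplex.of (fun n => ModuleCat.of A (V n)) (fun n => ModuleCat.ofHom (d n))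
    (fun n => by rw [← ModuleCat.ofHom_comp, h]; rfl)

lemma CC_d (V : ℕ → Type) [∀ n, AddCommGroup (V n)] [∀ n, Module A (V n)]
    (d : ∀ n, V (n + 1) →ₗ[A] V n) (h : ∀ n, d n ∘ₗ d (n + 1) = 0) (n : ℕ) :
    (CC V d h).d (n + 1) n = ModuleCat.ofHom (d n) :=
  ChainComplex.of_d (fun n => ModuleCat.of A (V n)) (fun n => ModuleCat.ofHom (d n)) _

lemma length_quot_congr {V : Type} [AddCommGroup V] [Module A V] (Z Z' B B' : Submodule A V)
    (h : Z = Z') (hB : B = B') :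
    Module.length A (Z ⧸ B.submoduleOf Z) = Module.length A (Z' ⧸ B'.submoduleOf Z') := by
  subst h hB; rfl

lemma hlen_eq (K : ChainComplex (ModuleCat.{0} A) ℕ) (n : ℕ) :
    hlen K n = Module.length A
      (LinearMap.ker (K.d n ((ComplexShape.down ℕ).next n)).hom ⧸
        (LinearMap.range (K.d (n+1) n).hom).submoduleOf
          (LinearMap.ker (K.d n ((ComplexShape.down ℕ).next n)).hom)) := by
  have hp : (ComplexShape.down ℕ).prev n = n + 1 := by simp
  have e1 := ((K.sc n).moduleCatHomologyIso).toLinearEquiv.length_eq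
  unfold hlen
  refine e1.trans ?_
  have : LinearMap.range (K.sc n).moduleCatToCycles =
     (LinearMap.range (K.d ((ComplexShape.down ℕ).prev n) n).hom).submoduleOf
       (LinearMap.ker (K.d n ((ComplexShape.down ℕ).next n)).hom) := by
    ext ⟨x, hx⟩
    simp only [LinearMap.mem_range, Submodule.submoduleOf]
    constructor
    · rintro ⟨y, hy⟩
      exact ⟨y, congrArg Subtype.val hy⟩
    · rintro ⟨y, hy⟩
      exact ⟨y, Subtype.ext hy⟩
  change Module.length A (LinearMap.ker (K.d n ((ComplexShape.down ℕ).next n)).hom ⧸ 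
    LinearMap.range (K.sc n).moduleCatToCycles) = _
  rw [this, hp]
  rfl

lemma hlen_CC (V : ℕ → Type) [∀ n, AddCommGroup (V n)] [∀ n, Module A (V n)]
    (d : ∀ n, V (n + 1) →ₗ[A] V n) (h : ∀ n, d n ∘ₗ d (n + 1) = 0) (n : ℕ) :
    hlen (CC V d h) n = Module.length A (eH V d n) := by
  rw [hlen_eq]
  apply length_quot_congr (V := V n)
  · cases n with
    | zero => 
      have : (CC V d h).d 0 ((ComplexShape.down ℕ).next 0) = 0 := by
        apply HomologicalComplex.shape
        simp
      rw [this]; simp [Zc]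
    | succ n =>
      have hp : (ComplexShape.down ℕ).next (n + 1) = n := by simp
      rw [hp, CC_d]; rfl
  · rw [CC_d]; rfl

/-- tensor complex -/
noncomputable abbrev TC (L : Type) [AddCommGroup L] [Module A L]
    (K : ChainComplex (ModuleCat.{0} A) ℕ) : ChainComplex (ModuleCat.{0} A) ℕ :=
  (((MonoidalCategory.tensoringLeft (ModuleCat.{0} A)).obj (ModuleCat.of A L)).mapHomologicalComplex
    (ComplexShape.down ℕ)).obj K

lemma lT_comp (L : Type) [AddCommGroup L] [Module A L]
    (V : ℕ → Type) [∀ n, AddCommGroup (V n)] [∀ n, Module A (V n)]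
    (d : ∀ n, V (n + 1) →ₗ[A] V n) (h : ∀ n, d n ∘ₗ d (n + 1) = 0) (n) :
    LinearMap.lTensor L (d n) ∘ₗ LinearMap.lTensor L (d (n+1)) = 0 := by
  rw [← LinearMap.lTensor_comp, h, LinearMap.lTensor_zero]

noncomputable def TC_CC_iso (L : Type) [AddCommGroup L] [Module A L]
    (V : ℕ → Type) [∀ n, AddCommGroup (V n)] [∀ n, Module A (V n)]
    (d : ∀ n, V (n + 1) →ₗ[A] V n) (h : ∀ n, d n ∘ₗ d (n + 1) = 0) :
    TC L (CC V d h) ≅ CC (fun n => L ⊗[A] V n) (fun n => LinearMap.lTensor L (d n))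
      (lT_comp L V d h) :=
  HomologicalComplex.Hom.isoOfComponents (fun n => Iso.refl _) (by
    intro i j hij
    obtain rfl : j + 1 = i := hij
    have h1 : (TC L (CC V d h)).d (j + 1) j =
        ((MonoidalCategory.tensoringLeft (ModuleCat.{0} A)).obj (ModuleCat.of A L)).map
          (ModuleCat.ofHom (d j)) := by
      rw [← CC_d V d h j]; rfl
    rw [h1, CC_d]
    rfl)

lemma hlen_TC (L : Type) [AddCommGroup L] [Module A L]
    (V : ℕ → Type) [∀ n, AddCommGroup (V n)] [∀ n, Module A (V n)]
    (d : ∀ n, V (n + 1) →ₗ[A] V n) (h : ∀ n, d n ∘ₗ d (n + 1) = 0) (n) :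
    hlen (TC L (CC V d h)) n =
      Module.length A (eH (fun n => L ⊗[A] V n) (fun n => LinearMap.lTensor L (d n)) n) := by
  rw [hlen_iso (TC_CC_iso L V d h), hlen_CC]

end basics

section res
variable {A : Type} [CommRing A]

/-- a resolution by finite free modules -/
structure FreeRes (A : Type) [CommRing A] (N : Type) [AddCommGroup N] [Module A N] where
  b : ℕ → ℕ
  f : ∀ p, (Fin (b (p + 1)) → A) →ₗ[A] (Fin (b p) → A)
  ε : (Fin (b 0) → A) →ₗ[A] N
  surj : Function.Surjective ε
  ex0 : Function.Exact (f 0) ε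
  ex : ∀ p, Function.Exact (f (p + 1)) (f p)

variable {N : Type} [AddCommGroup N] [Module A N]

lemma FreeRes.comp (X : FreeRes A N) (n : ℕ) : X.f n ∘ₗ X.f (n + 1) = 0 :=
  (X.ex n).linearMap_comp_eq_zero

noncomputable abbrev FreeRes.cx (X : FreeRes A N) : ChainComplex (ModuleCat.{0} A) ℕ :=
  CC (fun n => Fin (X.b n) → A) X.f X.comp

lemma FreeRes.exactAt (X : FreeRes A N) (n : ℕ) : X.cx.ExactAt (n + 1) := by
  rw [HomologicalComplex.exactAt_iff' _ (n + 2) (n + 1) n (by simp) (by simp),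
    ShortComplex.ShortExact.moduleCat_exact_iff_function_exact]
  have h := X.ex n
  have h1 := CC_d (fun n => Fin (X.b n) → A) X.f X.comp n
  have h2 := CC_d (fun n => Fin (X.b n) → A) X.f X.comp (n + 1)
  have h3 : Function.Exact (X.cx.d (n + 1 + 1) (n + 1)).hom (X.cx.d (n + 1) n).hom := by
    rw [h1, h2]; exact h
  exact h3

lemma FreeRes.d_ε (X : FreeRes A N) : X.cx.d 1 0 ≫ ModuleCat.ofHom X.ε = 0 := by
  rw [CC_d, ← ModuleCat.ofHom_comp, X.ex0.linearMap_comp_eq_zero]; rfl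

noncomputable def FreeRes.proj (X : FreeRes A N) : ProjectiveResolution (ModuleCat.of A N) where
  complex := X.cx
  projective n := by
    change Projective (ModuleCat.of A (Fin (X.b n) → A))
    rw [← IsProjective.iff_projective]
    infer_instance
  π := (ChainComplex.toSingle₀Equiv _ _).symm ⟨ModuleCat.ofHom X.ε, X.d_ε⟩
  quasiIso := ⟨fun n => by
    cases n
    · rw [ChainComplex.quasiIsoAt₀_iff, ShortComplex.quasiIso_iff_of_zeros' _ rfl rfl rfl]
      constructor
      · rw [ShortComplex.ShortExact.moduleCat_exact_iff_function_exact]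
        have h1 := CC_d (fun n => Fin (X.b n) → A) X.f X.comp 0
        have h3 : Function.Exact (X.cx.d (0 + 1) 0).hom X.ε := by
          rw [h1]; exact X.ex0
        have h4 := ChainComplex.toSingle₀Equiv_symm_apply_f_zero
          (C := X.cx) (ModuleCat.ofHom X.ε) X.d_ε
        have h5 : Function.Exact (X.cx.d (0 + 1) 0).hom
          (((ChainComplex.toSingle₀Equiv _ _).symm ⟨ModuleCat.ofHom X.ε, X.d_ε⟩).f 0 :
            X.cx.X 0 ⟶ ModuleCat.of A N).hom := by
          rw [h4]; exact h3
        exact h5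
      · dsimp [HomologicalComplex.shortComplexFunctor', HomologicalComplex.sc']
        rw [ChainComplex.toSingle₀Equiv_symm_apply_f_zero]
        exact (ModuleCat.epi_iff_surjective _).2 X.surj
    · rw [quasiIsoAt_iff_exactAt']
      · apply X.exactAt
      · apply ChainComplex.exactAt_succ_single_obj⟩

lemma FreeRes.hlen_succ (X : FreeRes A N) (n : ℕ) : hlen X.cx (n + 1) = 0 := by
  unfold hlen
  rw [Module.length_eq_zero_iff]
  exact ModuleCat.subsingleton_of_isZero (X.exactAt n).isZero_homology

lemma FreeRes.hlen_zero (X : FreeRes A N) : hlen X.cx 0 = Module.length A N := by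
  rw [hlen_CC]
  have e : ((Fin (X.b 0) → A) ⧸ LinearMap.range (X.f 0)) ≃ₗ[A] N :=
    (Submodule.quotEquivOfEq _ _ (LinearMap.exact_iff.1 X.ex0).symm).trans
      (X.ε.quotKerEquivOfSurjective X.surj)
  rw [← e.length_eq]
  let t : (⊤ : Submodule A (Fin (X.b 0) → A)) ≃ₗ[A] (Fin (X.b 0) → A) := Submodule.topEquiv
  have h : Submodule.map t.toLinearMap ((LinearMap.range (X.f 0)).submoduleOf ⊤) =
      LinearMap.range (X.f 0) := by
    ext x
    constructor
    · rintro ⟨y, hy, rfl⟩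
      exact hy
    · intro hx
      exact ⟨⟨x, trivial⟩, hx, rfl⟩
  exact (Submodule.Quotient.equiv ((LinearMap.range (X.f 0)).submoduleOf ⊤) _ t h).length_eq

/-- shift -/
noncomputable def FreeRes.shift (X : FreeRes A N) : FreeRes A (LinearMap.ker X.ε) where
  b n := X.b (n + 1)
  f n := X.f (n + 1)
  ε := (X.f 0).codRestrict _ (fun x => X.ex0.apply_apply_eq_zero x)
  surj := by
    rintro ⟨x, hx⟩
    obtain ⟨y, hy⟩ := (X.ex0 x).1 hx
    exact ⟨y, Subtype.ext hy⟩
  ex0 := by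
    intro x
    rw [← X.ex 0 x, Subtype.ext_iff]
    rfl
  ex n := X.ex (n + 1)

section loc
variable [IsLocalRing A]

lemma length_residue : Module.length A (IsLocalRing.ResidueField A) = 1 := by
  rw [Module.length_eq_of_surjective (R := IsLocalRing.ResidueField A)
    IsLocalRing.residue_surjective, Module.length_eq_finrank]
  simp

lemma finrank_tensor_eq_length (V : Type) [AddCommGroup V] [Module A V] [Module.Finite A V]
    (hV : ∀ r ∈ IsLocalRing.maximalIdeal A, ∀ v : V, r • v = 0) :
    (Module.finrank (IsLocalRing.ResidueField A) (IsLocalRing.ResidueField A ⊗[A] V) : ℕ∞) =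
      Module.length A V := by
  rw [← Module.length_eq_finrank, ← Module.length_eq_of_surjective (S := A)
    (R := IsLocalRing.ResidueField A) IsLocalRing.residue_surjective]
  have h : IsLocalRing.maximalIdeal A • (⊤ : Submodule A V) = ⊥ := by
    rw [eq_bot_iff, Submodule.smul_le]
    intro r hr v _
    simpa using hV r hr v
  have e := TensorProduct.quotTensorEquivQuotSMul V (IsLocalRing.maximalIdeal A)
  exact (e.trans (Submodule.quotEquivOfEqBot _ h)).length_eq

lemma exists_cover [IsNoetherianRing A] (N : Type) [AddCommGroup N] [Module A N]
    [Module.Finite A N] : ∃ (b : ℕ) (ε : (Fin b → A) →ₗ[A] N), Function.Surjective ε ∧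
      LinearMap.ker ε ≤ IsLocalRing.maximalIdeal A • ⊤ := by
  let k := IsLocalRing.ResidueField A
  let B := Module.finBasis k (k ⊗[A] N)
  have hs : Function.Surjective (TensorProduct.mk A k N 1) :=
    TensorProduct.mk_surjective A N k IsLocalRing.residue_surjective
  choose v hv using fun i => hs (B i)
  refine ⟨_, Fintype.linearCombination A v, ?_, ?_⟩
  · rw [← LinearMap.range_eq_top, Fintype.range_linearCombination]
    exact IsLocalRing.span_eq_top_of_tmul_eq_basis v B hv
  · intro x hx
    rw [LinearMap.mem_ker, Fintype.linearCombination_apply] at hx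
    have h2 : ∑ i, (IsLocalRing.residue A (x i)) • B i = 0 := by
      have := congrArg (TensorProduct.mk A k N 1) hx
      rw [map_sum, map_zero] at this
      rw [← this]
      refine Finset.sum_congr rfl fun i _ => ?_
      rw [map_smul, hv]
      exact IsScalarTower.algebraMap_smul k (x i) (B i)
    have h3 := Fintype.linearIndependent_iff.1 B.linearIndependent _ h2
    rw [pi_eq_sum_univ' x]
    refine Submodule.sum_mem _ fun i _ => ?_
    exact Submodule.smul_mem_smul ((IsLocalRing.residue_eq_zero_iff _).1 (h3 i)) trivial

/-- minimality -/
def FreeRes.Minimal (X : FreeRes A N) : Prop :=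
  ∀ p, LinearMap.range (X.f p) ≤ IsLocalRing.maximalIdeal A • ⊤

lemma exists_minimal [IsNoetherianRing A] (N : Type) [AddCommGroup N] [Module A N]
    [Module.Finite A N] : ∃ X : FreeRes A N, X.Minimal := by
  obtain ⟨b, ε, hs, hk⟩ := exists_cover (A := A) N
  have step : ∀ s : (Σ n : ℕ, Submodule A (Fin n → A)), ∃ (b' : ℕ)
      (g : (Fin b' → A) →ₗ[A] (Fin s.1 → A)), LinearMap.range g = s.2 ∧
      LinearMap.ker g ≤ IsLocalRing.maximalIdeal A • ⊤ := by
    rintro ⟨n, K⟩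
    obtain ⟨b', ε', hs', hk'⟩ := exists_cover (A := A) K
    refine ⟨b', K.subtype ∘ₗ ε', ?_, ?_⟩
    · rw [LinearMap.range_comp, LinearMap.range_eq_top.2 hs', Submodule.map_top, Submodule.range_subtype]
    · rw [LinearMap.ker_comp, Submodule.ker_subtype]
      exact hk'
  choose b' g hg hgk using step
  let s : ℕ → (Σ n : ℕ, Submodule A (Fin n → A)) := fun n =>
    Nat.rec ⟨b, LinearMap.ker ε⟩ (fun _ t => ⟨b' t, LinearMap.ker (g t)⟩) n
  have hmin : ∀ p, (s p).2 ≤ IsLocalRing.maximalIdeal A • ⊤ := by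
    intro p
    cases p with
    | zero => exact hk
    | succ n => exact hgk (s n)
  refine ⟨⟨fun n => (s n).1, fun n => g (s n), ε, hs, ?_, ?_⟩, ?_⟩
  · rw [LinearMap.exact_iff]
    exact (hg (s 0)).symm
  · intro p
    rw [LinearMap.exact_iff]
    exact (hg (s (p + 1))).symm
  · intro p
    exact (hg (s p)).le.trans (hmin p)

end loc
end res

section les
variable {A : Type} [CommRing A]

/-- map of tensor complexes -/
noncomputable abbrev TCmap {L L' : Type} [AddCommGroup L] [Module A L] [AddCommGroup L'] [Module A L']
    (g : L →ₗ[A] L') (K : ChainComplex (ModuleCat.{0} A) ℕ) : TC L K ⟶ TC L' K :=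
  (NatTrans.mapHomologicalComplex
    ((MonoidalCategory.tensoringLeft (ModuleCat.{0} A)).map (ModuleCat.ofHom g)) _).app K

lemma TCmap_f {L L' : Type} [AddCommGroup L] [Module A L] [AddCommGroup L'] [Module A L']
    (g : L →ₗ[A] L') (K : ChainComplex (ModuleCat.{0} A) ℕ) (n : ℕ) :
    (TCmap g K).f n = ModuleCat.ofHom (LinearMap.rTensor (K.X n) g) := rfl

variable {L' G L : Type} [AddCommGroup L] [Module A L] [AddCommGroup L'] [Module A L']
  [AddCommGroup G] [Module A G]

lemma TCmap_comp (f : L' →ₗ[A] G) (g : G →ₗ[A] L) (h : Function.Exact f g)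
    (K : ChainComplex (ModuleCat.{0} A) ℕ) : TCmap f K ≫ TCmap g K = 0 := by
  ext n : 1
  have h1 : LinearMap.rTensor (K.X n) g ∘ₗ LinearMap.rTensor (K.X n) f = 0 := by
    rw [← LinearMap.rTensor_comp, h.linearMap_comp_eq_zero, LinearMap.rTensor_zero]
  exact congrArg ModuleCat.ofHom h1

/-- the short complex -/
noncomputable abbrev TCS (f : L' →ₗ[A] G) (g : G →ₗ[A] L) (h : Function.Exact f g)
    (K : ChainComplex (ModuleCat.{0} A) ℕ) : ShortComplex (ChainComplex (ModuleCat.{0} A) ℕ) :=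
  ShortComplex.mk (TCmap f K) (TCmap g K) (TCmap_comp f g h K)

lemma TCS_exact (f : L' →ₗ[A] G) (g : G →ₗ[A] L) (h : Function.Exact f g)
    (hf : Function.Injective f) (hg : Function.Surjective g)
    (K : ChainComplex (ModuleCat.{0} A) ℕ) [∀ n, Module.Flat A (K.X n)] :
    (TCS f g h K).ShortExact := by
  apply HomologicalComplex.shortExact_of_degreewise_shortExact
  intro n
  have h1 : Function.Injective (LinearMap.rTensor (K.X n) f) :=
    Module.Flat.rTensor_preserves_injective_linearMap f hf
  have h2 : Function.Surjective (LinearMap.rTensor (K.X n) g) :=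
    LinearMap.rTensor_surjective _ hg
  have h3 := rTensor_exact (K.X n) h hg
  exact 
    { exact := (ShortComplex.ShortExact.moduleCat_exact_iff_function_exact _).2 h3
      mono_f := (ModuleCat.mono_iff_injective _).2 h1
      epi_g := (ModuleCat.epi_iff_surjective _).2 h2 }

lemma length_mid {U V W : Type} [AddCommGroup U] [Module A U] [AddCommGroup V] [Module A V]
    [AddCommGroup W] [Module A W] (f : U →ₗ[A] V) (g : V →ₗ[A] W) (h : Function.Exact f g) :
    Module.length A V ≤ Module.length A U + Module.length A W := by
  rw [Module.length_eq_add_of_exact (LinearMap.range f).subtype (LinearMap.range f).mkQ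
    (Submodule.injective_subtype _) (Submodule.mkQ_surjective _)
    (LinearMap.exact_subtype_mkQ _)]
  refine add_le_add ?_ ?_
  · exact Module.length_le_of_surjective f.rangeRestrict f.surjective_rangeRestrict
  · have e := (Submodule.quotEquivOfEq _ _ (LinearMap.exact_iff.1 h).symm).trans g.quotKerEquivRange
    rw [e.length_eq]
    exact Module.length_le_of_injective _ (Submodule.injective_subtype _)

lemma length_mid' (S : ShortComplex (ModuleCat.{0} A)) (h : S.Exact) :
    Module.length A S.X₂ ≤ Module.length A S.X₁ + Module.length A S.X₃ :=
  length_mid S.f.hom S.g.hom ((ShortComplex.ShortExact.moduleCat_exact_iff_function_exact _).1 h)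

lemma les_mid (f : L' →ₗ[A] G) (g : G →ₗ[A] L) (h : Function.Exact f g)
    (hf : Function.Injective f) (hg : Function.Surjective g)
    (K : ChainComplex (ModuleCat.{0} A) ℕ) [∀ n, Module.Flat A (K.X n)] (n : ℕ) :
    hlen (TC G K) n ≤ hlen (TC L' K) n + hlen (TC L K) n :=
  length_mid' _ ((TCS_exact f g h hf hg K).homology_exact₂ n)

lemma les_succ (f : L' →ₗ[A] G) (g : G →ₗ[A] L) (h : Function.Exact f g)
    (hf : Function.Injective f) (hg : Function.Surjective g)
    (K : ChainComplex (ModuleCat.{0} A) ℕ) [∀ n, Module.Flat A (K.X n)] (n : ℕ) :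
    hlen (TC L K) (n + 1) ≤ hlen (TC G K) (n + 1) + hlen (TC L' K) n :=
  length_mid' _ ((TCS_exact f g h hf hg K).homology_exact₃ (n + 1) n rfl)

lemma les_zero (f : L' →ₗ[A] G) (g : G →ₗ[A] L) (h : Function.Exact f g)
    (hf : Function.Injective f) (hg : Function.Surjective g)
    (K : ChainComplex (ModuleCat.{0} A) ℕ) [∀ n, Module.Flat A (K.X n)] :
    hlen (TC L K) 0 ≤ hlen (TC G K) 0 := by
  have hS := TCS_exact f g h hf hg K
  have := hS.epi_g
  have h1 : Epi (HomologicalComplex.homologyMap (TCS f g h K).g 0) :=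
    HomologicalComplex.epi_homologyMap_of_epi_of_not_rel (TCS f g h K).g 0 (by simp)
  exact Module.length_le_of_surjective _ ((ModuleCat.epi_iff_surjective _).1 h1)

lemma hlen_TC_self (K : ChainComplex (ModuleCat.{0} A) ℕ) (n : ℕ) :
    hlen (TC A K) n = hlen K n := by
  refine hlen_iso (HomologicalComplex.Hom.isoOfComponents
    (fun n => MonoidalCategory.leftUnitor (K.X n)) ?_) n
  intro i j _
  exact (MonoidalCategory.leftUnitor_naturality (K.d i j)).symm

lemma hlen_TC_pi (K : ChainComplex (ModuleCat.{0} A) ℕ) [∀ n, Module.Flat A (K.X n)]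
    (m n : ℕ) : hlen (TC (Fin m → A) K) n ≤ m * hlen K n := by
  induction m with
  | zero =>
    have h := les_mid (A := A) (LinearMap.id : (Fin 0 → A) →ₗ[A] _)
      (0 : (Fin 0 → A) →ₗ[A] (Fin 0 → A)) (fun x => by simp [Subsingleton.elim x 0])
        Function.injective_id (fun x => ⟨0, Subsingleton.elim _ _⟩) K n
    have : Subsingleton ((TC (Fin 0 → A) K).homology n) := by
      apply ModuleCat.subsingleton_of_isZero
      rw [← HomologicalComplex.exactAt_iff_isZero_homology]
      apply ShortComplex.exact_of_isZero_X₂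
      have : Subsingleton ((Fin 0 → A) ⊗[A] (K.X n)) := inferInstance
      exact ModuleCat.isZero_of_subsingleton (ModuleCat.of A ((Fin 0 → A) ⊗[A] (K.X n)))
    unfold hlen
    rw [Module.length_eq_zero]
    simp
  | succ m ih =>
    have h := les_mid (A := A) (LinearMap.single A (fun _ : Fin (m+1) => A) 0)
      (LinearMap.funLeft A A (Fin.succ : Fin m → Fin (m+1))) ?_ ?_ ?_ K n
    · refine h.trans ?_
      rw [hlen_TC_self, Nat.cast_succ, add_mul, one_mul, add_comm]
      exact add_le_add_left ih _
    · intro x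
      constructor
      · intro hx
        refine ⟨x 0, ?_⟩
        ext i
        refine Fin.cases ?_ (fun j => ?_) i
        · simp
        · have := congrFun hx j
          simpa [LinearMap.funLeft] using this.symm
      · rintro ⟨y, rfl⟩
        ext j
        simp [LinearMap.funLeft]
    · exact Pi.single_injective (M := fun _ : Fin (m+1) => A) 0
    · exact LinearMap.funLeft_surjective_of_injective _ _ _ (Fin.succ_injective _)

theorem lemma2 (K : ChainComplex (ModuleCat.{0} A) ℕ) [∀ n, Module.Flat A (K.X n)] (i : ℕ) :
    ∀ (L : Type) [AddCommGroup L] [Module A L] (X : FreeRes A L),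
    hlen (TC L K) i ≤ ∑ j ∈ Finset.range (i + 1), X.b j * hlen K (i - j) := by
  induction i with
  | zero =>
    intro L _ _ X
    have := les_zero (LinearMap.ker X.ε).subtype X.ε (LinearMap.exact_subtype_ker_map _) (Submodule.injective_subtype _) X.surj K
    simpa using this.trans (hlen_TC_pi K _ _)
  | succ i ih =>
    intro L _ _ X
    have := les_succ (LinearMap.ker X.ε).subtype X.ε (LinearMap.exact_subtype_ker_map _) (Submodule.injective_subtype _) X.surj K i
    refine this.trans ?_
    rw [Finset.sum_range_succ', add_comm]
    refine add_le_add ?_ (hlen_TC_pi K _ _)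
    refine (ih _ X.shift).trans (le_of_eq ?_)
    refine Finset.sum_congr rfl fun j _ => ?_
    rw [Nat.add_sub_add_right]
    rfl

end les

section betti
variable {A : Type} [CommRing A]

lemma homologyMap_smul_id (K : ChainComplex (ModuleCat.{0} A) ℕ) (r : A) (n : ℕ) :
    HomologicalComplex.homologyMap (r • 𝟙 K) n = r • 𝟙 _ := by
  have h : HomologicalComplex.homologyMap (r • 𝟙 K) n =
    ShortComplex.homologyMap (r • 𝟙 (K.sc n)) := rfl
  rw [h, ShortComplex.homologyMap_smul, ShortComplex.homologyMap_id]
  rfl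

lemma smul_π {N : Type} [AddCommGroup N] [Module A N]
    (P : ProjectiveResolution (ModuleCat.of A N)) (r : A) (hr : ∀ v : N, r • v = 0) :
    (r • 𝟙 P.complex) ≫ P.π = 0 := by
  have h0 : r • (P.π.f 0) = 0 := by
    ext v
    exact hr _
  apply (HomologicalComplex.to_single_hom_ext)
  have h1 : ((r • 𝟙 P.complex) ≫ P.π).f 0 = r • P.π.f 0 := by
    ext v
    simp
  rw [h1, h0]
  rfl

lemma tensor_smul_id (M : ModuleCat.{0} A) (K : ChainComplex (ModuleCat.{0} A) ℕ) (r : A) :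
    (((MonoidalCategory.tensoringLeft (ModuleCat.{0} A)).obj M).mapHomologicalComplex
      (ComplexShape.down ℕ)).map (r • 𝟙 K) = r • 𝟙 (TC M K) := by
  ext i : 1
  change MonoidalCategory.whiskerLeft M (r • 𝟙 (K.X i)) = r • 𝟙 _
  rw [MonoidalLinear.whiskerLeft_smul, MonoidalCategory.whiskerLeft_id]
  rfl

lemma leftDerived_killed (M : ModuleCat.{0} A) {N : Type} [AddCommGroup N] [Module A N]
    (P : ProjectiveResolution (ModuleCat.of A N)) (n : ℕ) (r : A) (hr : ∀ v : N, r • v = 0)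
    (x : (TC M P.complex).homology n) : r • x = 0 := by
  let F := (MonoidalCategory.tensoringLeft (ModuleCat.{0} A)).obj M
  have h := Functor.leftDerived_map_eq F n (X := ModuleCat.of A N) (Y := ModuleCat.of A N) 0
    (P := P) (Q := P) (r • 𝟙 P.complex) (by
      rw [smul_π P r hr, Functor.map_zero, Limits.comp_zero])
  have h' := Functor.leftDerived_map_eq F n (X := ModuleCat.of A N) (Y := ModuleCat.of A N) 0
    (P := P) (Q := P) 0 (by
      rw [Functor.map_zero, Limits.comp_zero, Limits.zero_comp])
  rw [h', Iso.cancel_iso_hom_left, Iso.cancel_iso_inv_right] at h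
  rw [Functor.map_zero, Functor.comp_map, tensor_smul_id] at h
  have h3 := h.trans (homologyMap_smul_id (TC M P.complex) r n)
  exact (congrArg (fun t => t.hom x) h3).symm

variable [IsLocalRing A]

lemma homology_finite [IsNoetherianRing A] (K : ChainComplex (ModuleCat.{0} A) ℕ) (n : ℕ)
    [Module.Finite A (K.X n)] : Module.Finite A (K.homology n) := by
  have e := ((K.sc n).moduleCatHomologyIso).toLinearEquiv
  have : Module.Finite A (K.sc n).X₂ := ‹_›
  have : Module.Finite A (K.sc n).moduleCatLeftHomologyData.H :=
    inferInstanceAs (Module.Finite A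
      (LinearMap.ker (K.sc n).g.hom ⧸ LinearMap.range (K.sc n).moduleCatToCycles))
  exact Module.Finite.equiv e.symm

lemma TC_killed (M : Type) [AddCommGroup M] [Module A M]
    (P : FreeRes A (IsLocalRing.ResidueField A)) (i : ℕ) (r : A)
    (hr : r ∈ IsLocalRing.maximalIdeal A) (x : (TC M P.cx).homology i) : r • x = 0 := by
  refine leftDerived_killed (ModuleCat.of A M) P.proj i r (fun v => ?_) x
  change IsLocalRing.residue A r • v = 0
  rw [(IsLocalRing.residue_eq_zero_iff r).2 hr, zero_smul]

/-- comparison -/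
noncomputable def torEquiv (M : Type) [AddCommGroup M] [Module A M]
    (P : FreeRes A (IsLocalRing.ResidueField A)) (i : ℕ) :
    (((Tor (ModuleCat A) i).obj (ModuleCat.of A M)).obj
        (ModuleCat.of A (IsLocalRing.ResidueField A))) ≃ₗ[A] (TC M P.cx).homology i :=
    (P.proj.isoLeftDerivedObj
      ((MonoidalCategory.tensoringLeft (ModuleCat.{0} A)).obj (ModuleCat.of A M)) i).toLinearEquiv

lemma finrank_aux (T H : Type) [AddCommGroup T] [Module A T] [AddCommGroup H] [Module A H]
    (e : T ≃ₗ[A] H) [Module.Finite A H]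
    (hV : ∀ r ∈ IsLocalRing.maximalIdeal A, ∀ v : H, r • v = 0) :
    (Module.finrank (IsLocalRing.ResidueField A) (IsLocalRing.ResidueField A ⊗[A] T) : ℕ∞) =
      Module.length A H := by
  have := Module.Finite.equiv e.symm
  rw [finrank_tensor_eq_length, e.length_eq]
  intro r hr v
  apply e.injective
  rw [map_smul, map_zero, hV r hr]

lemma TC_finite [IsNoetherianRing A] (M : Type) [AddCommGroup M] [Module A M] [Module.Finite A M]
    (P : FreeRes A (IsLocalRing.ResidueField A)) (i : ℕ) :
    Module.Finite A ((TC M P.cx).homology i) := by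
  have : Module.Finite A ((TC M P.cx).X i) :=
    inferInstanceAs (Module.Finite A (M ⊗[A] (Fin (P.b i) → A)))
  exact homology_finite (TC M P.cx) i

lemma betti_eq [IsNoetherianRing A] (M : Type) [AddCommGroup M] [Module A M] [Module.Finite A M]
    (P : FreeRes A (IsLocalRing.ResidueField A)) (i : ℕ) :
    (bettiNumber A M i : ℕ∞) = hlen (TC M P.cx) i := by
  have := TC_finite M P i
  exact finrank_aux _ _ (torEquiv M P i) (TC_killed M P i)

lemma minimal_tensor (V W : Type) [AddCommGroup V] [Module A V] [AddCommGroup W] [Module A W]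
    (d : V →ₗ[A] W) (hd : LinearMap.range d ≤ IsLocalRing.maximalIdeal A • ⊤) :
    LinearMap.lTensor (IsLocalRing.ResidueField A) d = 0 := by
  refine TensorProduct.ext' fun x v => ?_
  rw [LinearMap.lTensor_tmul, LinearMap.zero_apply]
  have h := hd ⟨v, rfl⟩
  generalize d v = y at h
  induction h using Submodule.smul_induction_on' with
  | smul r hr w _ =>
    rw [← TensorProduct.smul_tmul]
    have : r • x = IsLocalRing.residue A r • x := rfl
    rw [this, (IsLocalRing.residue_eq_zero_iff r).2 hr, zero_smul, TensorProduct.zero_tmul]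
  | add a _ b _ ha hb => rw [TensorProduct.tmul_add, ha, hb, add_zero]

lemma length_eH_zero (V : ℕ → Type) [∀ n, AddCommGroup (V n)] [∀ n, Module A (V n)]
     (d : ∀ n, V (n + 1) →ₗ[A] V n) (hd : ∀ n, d n = 0) (n : ℕ) :
    Module.length A (eH V d n) = Module.length A (V n) := by
  have h1 : Zc V d n = ⊤ := by
    cases n with
    | zero => rfl
    | succ n => simp [Zc, hd]
  have h2 : LinearMap.range (d n) = ⊥ := by simp [hd]
  rw [length_quot_congr _ _ _ _ h1 h2]
  have h3 : (⊥ : Submodule A (V n)).submoduleOf ⊤ = ⊥ := by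
    ext x; simp [Submodule.submoduleOf]
  rw [((Submodule.quotEquivOfEqBot _ h3).trans Submodule.topEquiv).length_eq]

lemma hlen_minimal (V : ℕ → Type) [∀ n, AddCommGroup (V n)] [∀ n, Module A (V n)]
    [∀ n, Module.Finite A (V n)] [∀ n, Module.Free A (V n)]
    (d : ∀ n, V (n + 1) →ₗ[A] V n) (h : ∀ n, d n ∘ₗ d (n + 1) = 0)
    (hd : ∀ n, LinearMap.range (d n) ≤ IsLocalRing.maximalIdeal A • ⊤) (n : ℕ) :
    hlen (TC (IsLocalRing.ResidueField A) (CC V d h)) n = Module.finrank A (V n) := by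
  rw [hlen_TC, length_eH_zero _ _ (fun n => minimal_tensor _ _ (d n) (hd n))]
  rw [Module.length_eq_of_surjective (R := IsLocalRing.ResidueField A)
    IsLocalRing.residue_surjective, Module.length_eq_finrank, Module.finrank_baseChange]

lemma betti_residue [IsNoetherianRing A] 
    (P : FreeRes A (IsLocalRing.ResidueField A)) (hP : P.Minimal) (i : ℕ) :
    bettiNumber A (IsLocalRing.ResidueField A) i = P.b i := by
  have h := betti_eq (IsLocalRing.ResidueField A) P i
  rw [hlen_minimal _ _ _ hP] at h
  simpa using h

lemma betti_le [IsNoetherianRing A] (M : Type) [AddCommGroup M] [Module A M] [Module.Finite A M]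
    (P : FreeRes A (IsLocalRing.ResidueField A)) (F : FreeRes A M) (i : ℕ) :
    bettiNumber A M i ≤ F.b i := by
  have : ∀ n, Module.Flat A (P.cx.X n) := fun n =>
    inferInstanceAs (Module.Flat A (Fin (P.b n) → A))
  have h := lemma2 P.cx i M F
  rw [← betti_eq, Finset.sum_range_succ, Finset.sum_eq_zero, zero_add, Nat.sub_self,
    P.hlen_zero, length_residue, mul_one] at h
  · exact_mod_cast h
  · intro j hj
    obtain ⟨m, hm⟩ : ∃ m, i - j = m + 1 := ⟨i - j - 1, by have := Finset.mem_range.1 hj; omega⟩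
    rw [hm, P.hlen_succ, mul_zero]

end betti

section tot
variable {Q R : Type} [CommRing Q] [CommRing R] [Algebra Q R]
variable (D : ℕ → ℕ → Type) [∀ p q, AddCommGroup (D p q)] [∀ p q, Module R (D p q)]

/-- total modules -/
abbrev TT (n : ℕ) : Type :=
  (s : {s : ℕ × ℕ // s ∈ Finset.HasAntidiagonal.antidiagonal n}) → D s.1.1 s.1.2

lemma ad_h {n : ℕ} (s : {s : ℕ × ℕ // s ∈ Finset.HasAntidiagonal.antidiagonal n}) :
    (s.1.1 + 1, s.1.2) ∈ Finset.HasAntidiagonal.antidiagonal (n + 1) := by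
  have := Finset.HasAntidiagonal.mem_antidiagonal.1 s.2
  rw [Finset.HasAntidiagonal.mem_antidiagonal]
  dsimp
  omega

lemma ad_v {n : ℕ} (s : {s : ℕ × ℕ // s ∈ Finset.HasAntidiagonal.antidiagonal n}) :
    (s.1.1, s.1.2 + 1) ∈ Finset.HasAntidiagonal.antidiagonal (n + 1) := by
  have := Finset.HasAntidiagonal.mem_antidiagonal.1 s.2
  rw [Finset.HasAntidiagonal.mem_antidiagonal]
  dsimp
  omega

variable {D} (dh : ∀ p q, D (p + 1) q →ₗ[R] D p q) (dv : ∀ p q, D p (q + 1) →ₗ[R] D p q)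

/-- total differential -/
noncomputable def tot (n : ℕ) : TT D (n + 1) →ₗ[R] TT D n :=
  LinearMap.pi fun s =>
    (dh s.1.1 s.1.2) ∘ₗ LinearMap.proj (R := R) (φ := fun s : {s : ℕ × ℕ // s ∈ Finset.HasAntidiagonal.antidiagonal (n + 1)} => D s.1.1 s.1.2) ⟨(s.1.1 + 1, s.1.2), ad_h s⟩ +
    ((-1 : R) ^ s.1.1) • ((dv s.1.1 s.1.2) ∘ₗ
      LinearMap.proj (R := R) (φ := fun s : {s : ℕ × ℕ // s ∈ Finset.HasAntidiagonal.antidiagonal (n + 1)} => D s.1.1 s.1.2) ⟨(s.1.1, s.1.2 + 1), ad_v s⟩)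

lemma tot_apply (n : ℕ) (v : TT D (n + 1)) (s) : tot dh dv n v s =
    dh s.1.1 s.1.2 (v ⟨(s.1.1 + 1, s.1.2), ad_h s⟩) +
      ((-1 : R) ^ s.1.1) • dv s.1.1 s.1.2 (v ⟨(s.1.1, s.1.2 + 1), ad_v s⟩) := rfl

lemma sgn_sq (p : ℕ) : ((-1 : R) ^ p) * ((-1 : R) ^ p) = 1 := by
  rw [← mul_pow]; simp

lemma tot_comp (hh : ∀ p q x, dh p q (dh (p + 1) q x) = 0)
    (vv : ∀ p q x, dv p q (dv p (q + 1) x) = 0)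
    (hv : ∀ p q x, dh p q (dv (p + 1) q x) = dv p q (dh p (q + 1) x))
    (n : ℕ) : tot dh dv n ∘ₗ tot dh dv (n + 1) = 0 := by
  refine LinearMap.ext fun v => funext fun s => ?_
  rw [LinearMap.comp_apply, tot_apply, tot_apply, tot_apply]
  dsimp only
  rw [map_add, map_add, map_smul, map_smul, hh, vv, hv, pow_succ]
  simp

variable [∀ p q, Module Q (D p q)] [∀ p q, IsScalarTower Q R (D p q)]
variable {E : ℕ → Type} [∀ q, AddCommGroup (E q)] [∀ q, Module Q (E q)]


lemma tot_inj (vv : ∀ p q x, dv p q (dv p (q + 1) x) = 0)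
    (hv : ∀ p q x, dh p q (dv (p + 1) q x) = dv p q (dh p (q + 1) x))
    (e : ∀ q, D 0 q →ₗ[Q] E q) (dE : ∀ q, E (q + 1) →ₗ[Q] E q)
    (hex : ∀ p q, Function.Exact (dh (p + 1) q) (dh p q))
    (hex0 : ∀ q, Function.Exact (dh 0 q) (e q)) (hsurj : ∀ q, Function.Surjective (e q))
    (he : ∀ q x, e q (dv 0 q x) = dE q (e (q + 1) x)) (n : ℕ) (z : TT D n)
    (hz : z ∈ Zc (TT D) (tot dh dv) n)
    (hz0 : e n (z ⟨(0, n), by simp⟩) ∈ LinearMap.range (dE n)) :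
    z ∈ LinearMap.range (tot dh dv n) := by
  classical
  let zt : ∀ p q, D p q := fun p q =>
    if h : (p, q) ∈ Finset.HasAntidiagonal.antidiagonal n then z ⟨(p, q), h⟩ else 0
  have hzt : ∀ p q, dh p q (zt (p + 1) q) + ((-1 : R) ^ p) • dv p q (zt p (q + 1)) = 0 := by
    intro p q
    by_cases hn : p + q + 1 = n
    · subst hn
      have h1 : (p + 1, q) ∈ Finset.HasAntidiagonal.antidiagonal (p + q + 1) := by
        rw [Finset.HasAntidiagonal.mem_antidiagonal]; dsimp; omega
      have h2 : (p, q + 1) ∈ Finset.HasAntidiagonal.antidiagonal (p + q + 1) := by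
        rw [Finset.HasAntidiagonal.mem_antidiagonal]; dsimp; omega
      simp only [zt, dif_pos h1, dif_pos h2]
      exact congrFun (show tot dh dv (p + q) z = 0 from hz) ⟨(p, q), by simp⟩
    · have h1 : (p + 1, q) ∉ Finset.HasAntidiagonal.antidiagonal n := by
        rw [Finset.HasAntidiagonal.mem_antidiagonal]; dsimp; omega
      have h2 : (p, q + 1) ∉ Finset.HasAntidiagonal.antidiagonal n := by
        rw [Finset.HasAntidiagonal.mem_antidiagonal]; dsimp; omega
      simp only [zt, dif_neg h1, dif_neg h2]
      simp
  let S : ∀ p, (∀ q, D p q) → Prop := fun p y =>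
    ∀ q, ∃ x, dh p q x = zt p q - ((-1 : R) ^ p) • dv p q (y (q + 1))
  have step : ∀ p (y : {y : ∀ q, D p q // S p y}), ∃ y' : {y : ∀ q, D (p + 1) q // S (p + 1) y},
      ∀ q, dh p q (y'.1 q) = zt p q - ((-1 : R) ^ p) • dv p q (y.1 (q + 1)) := by
    rintro p ⟨y, hy⟩
    have hy2 := hy
    choose y' hy' using hy2
    refine ⟨⟨y', fun q => ?_⟩, hy'⟩
    apply (hex p q _).1
    have h1 := hzt p q
    rw [map_sub, map_smul, hv, hy', map_sub, map_smul, vv, smul_zero, sub_zero, pow_succ,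
      mul_neg_one, neg_smul, sub_neg_eq_add]
    exact h1
  choose nxt hnxt using step
  obtain ⟨w, hw⟩ := hz0
  obtain ⟨y, rfl⟩ := hsurj _ w
  let y0 : ∀ q, D 0 q := Pi.single (n + 1) y
  have hy0 : S 0 y0 := by
    intro q
    by_cases hq : q = n
    · subst hq
      have : (0, q) ∈ Finset.HasAntidiagonal.antidiagonal q := by simp
      apply (hex0 q _).1
      simp only [zt, dif_pos this, y0, Pi.single_eq_same, pow_zero, one_smul]
      rw [map_sub, he, hw, sub_self]
    · have : (0, q) ∉ Finset.HasAntidiagonal.antidiagonal n := by simpa using hq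
      refine ⟨0, ?_⟩
      simp only [zt, dif_neg this, y0]
      rw [Pi.single_eq_of_ne (by omega)]
      simp
  let Y : ∀ p, {y : ∀ q, D p q // S p y} := fun p => Nat.rec ⟨y0, hy0⟩ nxt p
  have hY : ∀ p q, dh p q ((Y (p + 1)).1 q) =
      zt p q - ((-1 : R) ^ p) • dv p q ((Y p).1 (q + 1)) := fun p q => hnxt p (Y p) q
  refine ⟨fun s => (Y s.1.1).1 s.1.2, ?_⟩
  ext s
  rw [tot_apply, hY, sub_add_cancel]
  simp only [zt]
  rw [dif_pos s.2]

lemma length_le_aux {V W : Type} [AddCommGroup V] [Module R V] [Module Q V] [IsScalarTower Q R V]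
    [AddCommGroup W] [Module Q W] (hs : Function.Surjective (algebraMap Q R))
    (Z B : Submodule R V) (Z' B' : Submodule Q W) (f : V →ₗ[Q] W)
    (hZ : ∀ z ∈ Z, f z ∈ Z') (hB : ∀ z ∈ B, f z ∈ B') (hinj : ∀ z ∈ Z, f z ∈ B' → z ∈ B) :
    Module.length R (Z ⧸ B.submoduleOf Z) ≤ Module.length Q (Z' ⧸ B'.submoduleOf Z') := by
  rw [← Module.length_eq_of_surjective (S := Q) (R := R) hs]
  let g : Z →ₗ[Q] Z' := 
    { toFun := fun z => ⟨f z, hZ z z.2⟩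
      map_add' := fun a b => by ext; simp
      map_smul' := fun a b => by ext; simp }
  let k := Submodule.mapQ ((B.submoduleOf Z).restrictScalars Q) (B'.submoduleOf Z') g
    (fun x hx => hB _ hx)
  have hk : Function.Injective k := by
    rw [← LinearMap.ker_eq_bot, eq_bot_iff]
    refine (Submodule.ker_mapQ _ _ _ _).le.trans ?_
    rintro _ ⟨x, hx, rfl⟩
    rw [Submodule.mem_bot, Submodule.mkQ_apply, Submodule.Quotient.mk_eq_zero]
    exact hinj _ x.2 hx
  rw [← (Submodule.Quotient.restrictScalarsEquiv Q (B.submoduleOf Z)).length_eq]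
  exact Module.length_le_of_injective k hk

lemma tot_length (vv : ∀ p q x, dv p q (dv p (q + 1) x) = 0)
    (hv : ∀ p q x, dh p q (dv (p + 1) q x) = dv p q (dh p (q + 1) x))
    (e : ∀ q, D 0 q →ₗ[Q] E q) (dE : ∀ q, E (q + 1) →ₗ[Q] E q)
    (hs : Function.Surjective (algebraMap Q R))
    (hex : ∀ p q, Function.Exact (dh (p + 1) q) (dh p q))
    (hex0 : ∀ q, Function.Exact (dh 0 q) (e q)) (hsurj : ∀ q, Function.Surjective (e q))
    (he : ∀ q x, e q (dv 0 q x) = dE q (e (q + 1) x)) (n : ℕ) :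
    Module.length R (eH (TT D) (tot dh dv) n) ≤ Module.length Q (eH E dE n) := by
  have key : ∀ n (v : TT D (n + 1)), e n (tot dh dv n v ⟨(0, n), by simp⟩) =
      dE n (e (n + 1) (v ⟨(0, n + 1), by simp⟩)) := by
    intro n v
    rw [tot_apply, map_add, (hex0 _).apply_apply_eq_zero]
    simp [he]
  refine length_le_aux hs _ _ _ _ (e n ∘ₗ LinearMap.proj (R := Q)
    (φ := fun s : {s : ℕ × ℕ // s ∈ Finset.HasAntidiagonal.antidiagonal n} => D s.1.1 s.1.2) ⟨(0, n), by simp⟩)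
    ?_ ?_ ?_
  · intro z hz
    cases n with
    | zero => trivial
    | succ n =>
      have h := key n z
      rw [show tot dh dv n z = 0 from hz] at h
      exact h.symm.trans (map_zero _)
  · rintro _ ⟨v, rfl⟩
    exact ⟨_, (key n v).symm⟩
  · intro z hz hz0
    exact tot_inj dh dv vv hv e dE hex hex0 hsurj he n z hz hz0

lemma tot_minimal [IsLocalRing R]
    (hh : ∀ p q x, dh p q x ∈ IsLocalRing.maximalIdeal R • (⊤ : Submodule R (D p q)))
    (hv : ∀ p q x, dv p q x ∈ IsLocalRing.maximalIdeal R • (⊤ : Submodule R (D p q))) (n : ℕ) :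
    LinearMap.range (tot dh dv n) ≤ IsLocalRing.maximalIdeal R • ⊤ := by
  classical
  rintro _ ⟨v, rfl⟩
  generalize hy : tot dh dv n v = y
  have h : ∀ s, y s ∈ IsLocalRing.maximalIdeal R • (⊤ : Submodule R (D s.1.1 s.1.2)) := by
    intro s
    rw [← hy, tot_apply]
    exact Submodule.add_mem _ (hh _ _ _) (Submodule.smul_mem _ _ (hv _ _ _))
  rw [← Finset.univ_sum_single y]
  refine Submodule.sum_mem _ fun s _ => ?_
  have h2 := Submodule.mem_map_of_mem (f := LinearMap.single R (fun s : {s : ℕ × ℕ // s ∈ Finset.HasAntidiagonal.antidiagonal n} => D s.1.1 s.1.2) s) (h s)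
  rw [Submodule.map_smul''] at h2
  exact Submodule.smul_mono le_rfl le_top h2

lemma finrank_TT [Nontrivial R] [∀ p q, Module.Free R (D p q)] [∀ p q, Module.Finite R (D p q)] (n : ℕ) :
    Module.finrank R (TT D n) = ∑ p ∈ Finset.range (n + 1), Module.finrank R (D p (n - p)) := by
  rw [Module.finrank_pi_fintype, ← Finset.Nat.sum_antidiagonal_eq_sum_range_succ
    (fun p q => Module.finrank R (D p q)),
    Finset.sum_coe_sort (Finset.HasAntidiagonal.antidiagonal n) (fun s => Module.finrank R (D s.1 s.2))]

end tot

section fin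
variable {Q R : Type} [CommRing Q] [CommRing R] [Algebra Q R]
variable {M N : Type} [AddCommGroup M] [Module Q M] [Module R M] [IsScalarTower Q R M]
  [AddCommGroup N] [Module Q N]
variable (F : FreeRes R M) (X : FreeRes Q N)

/-- double complex -/
abbrev DD (p q : ℕ) : Type := (Fin (F.b p) → R) ⊗[Q] (Fin (X.b q) → Q)

/-- horizontal -/
noncomputable def ddh (p q : ℕ) : DD F X (p + 1) q →ₗ[R] DD F X p q :=
  TensorProduct.AlgebraTensorModule.map (F.f p) LinearMap.id

/-- vertical -/
noncomputable def ddv (p q : ℕ) : DD F X p (q + 1) →ₗ[R] DD F X p q :=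
  TensorProduct.AlgebraTensorModule.map LinearMap.id (X.f q)

/-- augmentation -/
noncomputable def dde (q : ℕ) : DD F X 0 q →ₗ[Q] M ⊗[Q] (Fin (X.b q) → Q) :=
  LinearMap.rTensor _ (F.ε.restrictScalars Q)

lemma ddh_coe (p q : ℕ) : (ddh F X p q : DD F X (p + 1) q → DD F X p q) =
    LinearMap.rTensor (Fin (X.b q) → Q) ((F.f p).restrictScalars Q) := rfl

lemma ddv_coe (p q : ℕ) : (ddv F X p q : DD F X p (q + 1) → DD F X p q) =
    LinearMap.lTensor (Fin (F.b p) → R) (X.f q) := rfl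

lemma dd_ex (p q : ℕ) : Function.Exact (ddh F X (p + 1) q) (ddh F X p q) := by
  rw [ddh_coe, ddh_coe]
  exact Module.Flat.rTensor_exact _ (f := (F.f (p + 1)).restrictScalars Q)
    (g := (F.f p).restrictScalars Q) (F.ex p)

lemma dd_ex0 (q : ℕ) : Function.Exact (ddh F X 0 q) (dde F X q) := by
  rw [ddh_coe]
  exact rTensor_exact _ (f := (F.f 0).restrictScalars Q)
    (g := F.ε.restrictScalars Q) F.ex0 F.surj

lemma dd_surj (q : ℕ) : Function.Surjective (dde F X q) :=
  LinearMap.rTensor_surjective _ F.surj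

lemma dd_vv (p q : ℕ) (x) : ddv F X p q (ddv F X p (q + 1) x) = 0 := by
  rw [ddv_coe, ddv_coe, ← LinearMap.comp_apply, ← LinearMap.lTensor_comp, X.comp,
    LinearMap.lTensor_zero, LinearMap.zero_apply]

lemma dd_hv (p q : ℕ) (x) : ddh F X p q (ddv F X (p + 1) q x) =
    ddv F X p q (ddh F X p (q + 1) x) := by
  rw [ddh_coe, ddh_coe, ddv_coe, ddv_coe, ← LinearMap.comp_apply, ← LinearMap.comp_apply,
    LinearMap.rTensor_comp_lTensor, LinearMap.lTensor_comp_rTensor]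

lemma dd_e (q : ℕ) (x) : dde F X q (ddv F X 0 q x) =
    LinearMap.lTensor M (X.f q) (dde F X (q + 1) x) := by
  unfold dde
  rw [ddv_coe, ← LinearMap.comp_apply, ← LinearMap.comp_apply,
    LinearMap.rTensor_comp_lTensor, LinearMap.lTensor_comp_rTensor]

lemma dd_comp (n : ℕ) :
    tot (ddh F X) (ddv F X) n ∘ₗ tot (ddh F X) (ddv F X) (n + 1) = 0 :=
  tot_comp _ _ (fun p q x => (dd_ex F X p q).apply_apply_eq_zero x) (dd_vv F X) (dd_hv F X) n

lemma dd_hlen (hs : Function.Surjective (algebraMap Q R)) (n : ℕ) :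
    hlen (CC (TT (DD F X)) (tot (ddh F X) (ddv F X)) (dd_comp F X)) n ≤ hlen (TC M X.cx) n := by
  rw [hlen_CC, hlen_TC]
  exact tot_length _ _ (dd_vv F X) (dd_hv F X) (dde F X) _ hs (dd_ex F X) (dd_ex0 F X)
    (dd_surj F X) (dd_e F X) n

variable [IsLocalRing Q] [IsLocalRing R]

lemma dd_minh (hF : F.Minimal) (p q : ℕ) (x) :
    ddh F X p q x ∈ IsLocalRing.maximalIdeal R • (⊤ : Submodule R (DD F X p q)) := by
  induction x using TensorProduct.induction_on with
  | zero => rw [map_zero]; exact zero_mem _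
  | add a b ha hb => rw [map_add]; exact add_mem ha hb
  | tmul a b =>
    have h := hF p ⟨a, rfl⟩
    change F.f p a ⊗ₜ b ∈ _
    generalize F.f p a = y at h
    induction h using Submodule.smul_induction_on' with
    | smul r hr w _ =>
      rw [← TensorProduct.smul_tmul']
      exact Submodule.smul_mem_smul hr trivial
    | add a _ c _ ha hb => rw [TensorProduct.add_tmul]; exact add_mem ha hb

lemma dd_minv (hX : X.Minimal)
    (hm : ∀ r ∈ IsLocalRing.maximalIdeal Q, algebraMap Q R r ∈ IsLocalRing.maximalIdeal R)
    (p q : ℕ) (x) :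
    ddv F X p q x ∈ IsLocalRing.maximalIdeal R • (⊤ : Submodule R (DD F X p q)) := by
  induction x using TensorProduct.induction_on with
  | zero => rw [map_zero]; exact zero_mem _
  | add a b ha hb => rw [map_add]; exact add_mem ha hb
  | tmul a b =>
    have h := hX q ⟨b, rfl⟩
    change a ⊗ₜ X.f q b ∈ _
    generalize X.f q b = y at h
    induction h using Submodule.smul_induction_on' with
    | smul r hr w _ =>
      rw [TensorProduct.tmul_smul, ← algebraMap_smul R r (a ⊗ₜ[Q] w)]
      exact Submodule.smul_mem_smul (hm r hr) trivial
    | add a _ c _ ha hb => rw [TensorProduct.tmul_add]; exact add_mem ha hb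

lemma dd_final (hs : Function.Surjective (algebraMap Q R)) (hF : F.Minimal) (hX : X.Minimal)
    (hm : ∀ r ∈ IsLocalRing.maximalIdeal Q, algebraMap Q R r ∈ IsLocalRing.maximalIdeal R)
    (G : FreeRes R (IsLocalRing.ResidueField R)) (i : ℕ) :
    ((∑ p ∈ Finset.range (i + 1), F.b p * X.b (i - p) : ℕ) : ℕ∞) ≤
      ∑ j ∈ Finset.range (i + 1), G.b j * hlen (TC M X.cx) (i - j) := by
  have : ∀ p q, Module.Finite R (DD F X p q) := fun p q =>
    Module.Finite.of_basis ((Pi.basisFun R (Fin (F.b p))).tensorProduct (Pi.basisFun Q (Fin (X.b q))))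
  have : ∀ p q, Module.Free R (DD F X p q) := fun p q => inferInstance
  have h1 := hlen_minimal (TT (DD F X)) (tot (ddh F X) (ddv F X)) (dd_comp F X)
    (tot_minimal _ _ (dd_minh F X hF) (dd_minv F X hX hm)) i
  have hfl : ∀ n, Module.Flat R
      ((CC (TT (DD F X)) (tot (ddh F X) (ddv F X)) (dd_comp F X)).X n) := fun n => by
    have hf : Module.Free R (TT (DD F X) n) := inferInstance
    exact @Module.Flat.of_projective R (TT (DD F X) n) _ _ _ Module.Projective.of_free
  have h2 := lemma2 (CC (TT (DD F X)) (tot (ddh F X) (ddv F X)) (dd_comp F X)) i _ G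
  rw [h1, finrank_TT] at h2
  have h3 : ∀ p q, Module.finrank R (DD F X p q) = F.b p * X.b q := by
    intro p q
    rw [Module.finrank_tensorProduct]
    simp
  simp only [h3] at h2
  refine h2.trans (Finset.sum_le_sum fun j _ => ?_)
  gcongr
  exact dd_hlen F X hs _

end fin
/-- **Lescot's inequality.** For a surjection `Q → R = Q/I` of Noetherian local
rings and a finitely generated `R`-module `M`, one has, for every `i ≥ 0`,
`∑_{p+q=i} β_p^R(M)·β_q^Q(k) ≤ ∑_{p+q=i} β_p^Q(M)·β_q^R(k)`, i.e.
`P_M^R(t)·P_k^Q(t) ≼ P_M^Q(t)·P_k^R(t)` coefficient-wise. -/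
theorem lescot_inequality
    (Q : Type) [CommRing Q] [IsNoetherianRing Q] [IsLocalRing Q]
    (I : Ideal Q) (hI : I ≤ IsLocalRing.maximalIdeal Q)
    [IsLocalRing (Q ⧸ I)]
    (M : Type) [AddCommGroup M] [Module Q M] [Module (Q ⧸ I) M]
    [IsScalarTower Q (Q ⧸ I) M] [Module.Finite (Q ⧸ I) M]
    (i : ℕ) :
    ∑ p ∈ Finset.range (i + 1),
        bettiNumber (Q ⧸ I) M p * bettiNumber Q (IsLocalRing.ResidueField Q) (i - p) ≤
      ∑ p ∈ Finset.range (i + 1),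
        bettiNumber Q M p *
          bettiNumber (Q ⧸ I) (IsLocalRing.ResidueField (Q ⧸ I)) (i - p) := by
  have hs : Function.Surjective (algebraMap Q (Q ⧸ I)) := Ideal.Quotient.mk_surjective
  have hfin : Module.Finite Q (Q ⧸ I) := inferInstance
  have hMQ : Module.Finite Q M := Module.Finite.trans (Q ⧸ I) M
  have hm : ∀ r ∈ IsLocalRing.maximalIdeal Q,
      algebraMap Q (Q ⧸ I) r ∈ IsLocalRing.maximalIdeal (Q ⧸ I) := by
    have : IsLocalHom (algebraMap Q (Q ⧸ I)) := IsLocalHom.of_surjective _ hs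
    intro r hr
    exact (IsLocalRing.mem_maximalIdeal _).2 (map_mem_nonunits_iff _ r |>.2 hr)
  obtain ⟨F, hF⟩ := exists_minimal (A := Q ⧸ I) M
  obtain ⟨X, hX⟩ := exists_minimal (A := Q) (IsLocalRing.ResidueField Q)
  obtain ⟨G, hG⟩ := exists_minimal (A := Q ⧸ I) (IsLocalRing.ResidueField (Q ⧸ I))
  have h := dd_final F X hs hF hX hm G i
  simp only [← betti_eq, ← betti_residue G hG] at h
  have h' : ∑ p ∈ Finset.range (i + 1), F.b p * X.b (i - p) ≤
      ∑ j ∈ Finset.range (i + 1),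
        bettiNumber (Q ⧸ I) (IsLocalRing.ResidueField (Q ⧸ I)) j * bettiNumber Q M (i - j) := by
    exact_mod_cast h
  calc _ ≤ ∑ p ∈ Finset.range (i + 1), F.b p * X.b (i - p) := by
        refine Finset.sum_le_sum fun p _ => ?_
        rw [betti_residue X hX]
        exact Nat.mul_le_mul_right _ (betti_le M G F p)
    _ ≤ _ := h'
    _ = _ := by
        rw [← Finset.sum_range_reflect]
        refine Finset.sum_congr rfl fun p hp => ?_
        have := Finset.mem_range.1 hp
        rw [mul_comm]
        congr 2 <;> omega
end

section
/- Let (Q, m, k) be a commutative Noetherian local ring, let f_1, …, f_n be a Q-regular sequence contained in m, set I = (f_1, …, f_n) and R = Q/I. If M is a finitely generated R-module with I ⊆ m·ann_Q(M), then M is inert by the surjection Q → R; that is, for every integer i ≥ 0, Σ_{p+q=i} β_p^R(M)·β_q^Q(k) = Σ_{p+q=i} β_p^Q(M)·β_q^R(k). -/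
open CategoryTheory TensorProduct

namespace Shamash

open Matrix

/-- A stage in the step-by-step construction of a free resolution. -/
abbrev Stage (A : Type) : Type := Σ a b : ℕ, Matrix (Fin a) (Fin b) A

theorem exists_step {A : Type} [CommRing A] [IsNoetherianRing A] (f : A) {a b : ℕ}
    (X : Matrix (Fin a) (Fin b) A) :
    ∃ (n : ℕ) (Y : Matrix (Fin b) (Fin n) A), (∃ Z : Matrix (Fin a) (Fin n) A, X * Y = f • Z) ∧
      ∀ v u, X *ᵥ v = f • u → ∃ w, v = Y *ᵥ w := by
  let N : Submodule A (Fin b → A) :=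
    (LinearMap.range (f • (LinearMap.id : (Fin a → A) →ₗ[A] (Fin a → A)))).comap X.mulVecLin
  obtain ⟨n, g, hg⟩ := Submodule.fg_iff_exists_fin_generating_family.1 (IsNoetherian.noetherian N)
  refine ⟨n, Matrix.of fun i j => g j i, ?_, ?_⟩
  · have h : ∀ j, ∃ u, X *ᵥ g j = f • u := by
      intro j
      have : g j ∈ N := hg ▸ Submodule.subset_span ⟨j, rfl⟩
      obtain ⟨u, hu⟩ := this
      exact ⟨u, by simpa using hu.symm⟩
    choose u hu using h
    refine ⟨Matrix.of fun i j => u j i, ?_⟩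
    ext i j
    simpa [Matrix.mul_apply, Matrix.mulVec, dotProduct] using congrFun (hu j) i
  · intro v u hv
    have : v ∈ N := ⟨u, by simpa using hv.symm⟩
    rw [← hg, Submodule.mem_span_range_iff_exists_fun] at this
    obtain ⟨c, hc⟩ := this
    refine ⟨c, ?_⟩
    rw [← hc]
    ext i
    simp [Matrix.mulVec, dotProduct, mul_comm]

/-- Next stage of the resolution (kernel modulo `f`). -/
noncomputable def nextStage {A : Type} [CommRing A] [IsNoetherianRing A] (f : A) (s : Stage A) :
    Stage A :=
  ⟨s.2.1, (exists_step f s.2.2).choose, (exists_step f s.2.2).choose_spec.choose⟩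

/-- The sequence of stages. -/
noncomputable def stages {A : Type} [CommRing A] [IsNoetherianRing A] (f : A) (s : Stage A) :
    ℕ → Stage A
  | 0 => s
  | (i + 1) => nextStage f (stages f s i)

theorem exists_res {A : Type} [CommRing A] [IsNoetherianRing A] (f : A) {a b : ℕ}
    (X : Matrix (Fin a) (Fin b) A) :
    ∃ (q : ℕ → ℕ) (δ : ∀ i, Matrix (Fin (q i)) (Fin (q (i + 1))) A),
      (∀ i, ∃ Z : Matrix (Fin (q i)) (Fin (q (i + 2))) A, δ i * δ (i + 1) = f • Z) ∧
      (∀ i v u, δ i *ᵥ v = f • u → ∃ w, v = δ (i + 1) *ᵥ w) ∧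
      ∃ (h0 : q 0 = a) (h1 : q 1 = b), (δ 0) = X.submatrix (Fin.cast h0) (Fin.cast h1) := by
  let s := stages f ⟨a, b, X⟩
  refine ⟨fun i => (s i).1, fun i => (s i).2.2, ?_, ?_, rfl, rfl, rfl⟩
  · intro i
    exact (exists_step f (s i).2.2).choose_spec.choose_spec.1
  · intro i
    exact (exists_step f (s i).2.2).choose_spec.choose_spec.2

theorem exists_seq {X : ℕ → Type} (P : ∀ i, X i → Prop) (R : ∀ i, X i → X (i + 1) → Prop)
    (x0 : X 0) (h0 : P 0 x0) (hs : ∀ i x, P i x → ∃ y, P (i + 1) y ∧ R i x y) :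
    ∃ x : ∀ i, X i, x 0 = x0 ∧ (∀ i, P i (x i)) ∧ ∀ i, R i (x i) (x (i + 1)) := by
  choose g hg using hs
  let x : ∀ i, {y : X i // P i y} := fun i =>
    Nat.rec ⟨x0, h0⟩ (fun i y => ⟨g i y.1 y.2, (hg i y.1 y.2).1⟩) i
  exact ⟨fun i => (x i).1, rfl, fun i => (x i).2, fun i => (hg i (x i).1 (x i).2).2⟩

/-- Lifting a matrix column by column. -/
theorem exists_matrix {A : Type} [CommRing A] {a b c : ℕ} (X : Matrix (Fin a) (Fin b) A)
    (V : Matrix (Fin a) (Fin c) A) (P : (Fin b → A) → Prop)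
    (h : ∀ j, ∃ w, V *ᵥ Pi.single j 1 = X *ᵥ w ∧ P w) :
    ∃ W : Matrix (Fin b) (Fin c) A, V = X * W ∧ ∀ j, P (fun i => W i j) := by
  choose w hw hP using h
  refine ⟨Matrix.of fun i j => w j i, ?_, fun j => hP j⟩
  ext i j
  have := congrFun (hw j) i
  rw [Matrix.mulVec_single_one] at this
  simpa [Matrix.mul_apply, Matrix.mulVec, dotProduct] using this

structure GD (A : Type) [CommRing A] (J : Ideal A) (f : A) (p : ℕ → ℕ)
    (d : ∀ i, Matrix (Fin (p i)) (Fin (p (i + 1))) A) where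
  q : ℕ → ℕ
  δ : ∀ i, Matrix (Fin (q i)) (Fin (q (i + 1))) A
  φ : ∀ i, Matrix (Fin (p (i + 1))) (Fin (q i)) A
  θ : Matrix (Fin (p 0)) (Fin (q 0)) A
  θ' : Matrix (Fin (q 0)) (Fin (p 0)) A
  hθ : θ * θ' = 1
  hθ' : θ' * θ = 1
  hδδ : ∀ i, ∃ Z : Matrix (Fin (q i)) (Fin (q (i + 2))) A, δ i * δ (i + 1) = f • Z
  hδex : ∀ i v u, δ i *ᵥ v = f • u → ∃ w z, v = δ (i + 1) *ᵥ w + f • z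
  hJ : ∀ i a b, φ i a b ∈ J
  hY : ∃ Y : Matrix (Fin (p 1)) (Fin (q 1)) A, θ * δ 0 = d 0 * Y
  hY' : ∃ (Y : Matrix (Fin (q 1)) (Fin (p 1)) A) (Z : Matrix (Fin (p 0)) (Fin (p 1)) A), d 0 = θ * δ 0 * Y + f • Z
  hφ0 : d 0 * φ 0 = f • θ
  hφ : ∀ i, ∃ W : Matrix (Fin (p (i + 1))) (Fin (q (i + 1))) A, d (i + 1) * φ (i + 1) = φ i * δ i - f • W

/-- Generic case. -/
theorem GD.generic {A : Type} [CommRing A] [IsNoetherianRing A] (J : Ideal A) (f : A) (p : ℕ → ℕ)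
    (d : ∀ i, Matrix (Fin (p i)) (Fin (p (i + 1))) A)
    (hdd : ∀ i, d i * d (i + 1) = 0)
    (hex : ∀ i v, d i *ᵥ v = 0 → ∃ w, v = d (i + 1) *ᵥ w)
    (hexJ : ∀ i v, (∀ a, v a ∈ J) → d i *ᵥ v = 0 → ∃ w, v = d (i + 1) *ᵥ w ∧ ∀ a, w a ∈ J)
    (hfJ : f ∈ J) (hf : ∀ x, f * x = 0 → x = 0)
    (φ0 : Matrix (Fin (p 1)) (Fin (p 0)) A) (hφ0J : ∀ a b, φ0 a b ∈ J)
    (hφ0 : d 0 * φ0 = f • (1 : Matrix (Fin (p 0)) (Fin (p 0)) A)) :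
    Nonempty (GD A J f p d) := by
  obtain ⟨q, δ, hδδ, hδex, h0, h1, hδ0⟩ := exists_res f (d 0)
  let θ : Matrix (Fin (p 0)) (Fin (q 0)) A := (1 : Matrix (Fin (p 0)) (Fin (p 0)) A).submatrix id (Fin.cast h0)
  let θ' : Matrix (Fin (q 0)) (Fin (p 0)) A := (1 : Matrix (Fin (p 0)) (Fin (p 0)) A).submatrix (Fin.cast h0) id
  let e0 : Fin (q 0) ≃ Fin (p 0) := finCongr h0
  let e1 : Fin (q 1) ≃ Fin (p 1) := finCongr h1
  have hθ : θ * θ' = 1 := by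
    have := Matrix.submatrix_mul_equiv (1 : Matrix (Fin (p 0)) (Fin (p 0)) A) (1 : Matrix (Fin (p 0)) (Fin (p 0)) A) id e0 id
    rw [Matrix.mul_one] at this
    exact this
  have hθ' : θ' * θ = 1 := by
    have := Matrix.submatrix_mul_equiv (1 : Matrix (Fin (p 0)) (Fin (p 0)) A) (1 : Matrix (Fin (p 0)) (Fin (p 0)) A) e0 (Equiv.refl _) e0
    rw [Matrix.mul_one, Matrix.submatrix_one_equiv] at this
    exact this
  have hθδ : θ * δ 0 = (d 0).submatrix id e1 := by
    have := Matrix.submatrix_mul_equiv (1 : Matrix (Fin (p 0)) (Fin (p 0)) A) (d 0) id e0 e1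
    rw [Matrix.one_mul] at this
    rw [hδ0]
    exact this
  let E : Matrix (Fin (p 1)) (Fin (q 1)) A := (1 : Matrix (Fin (p 1)) (Fin (p 1)) A).submatrix id e1
  let E' : Matrix (Fin (q 1)) (Fin (p 1)) A := (1 : Matrix (Fin (p 1)) (Fin (p 1)) A).submatrix e1 id
  have hE : (d 0).submatrix id e1 = d 0 * E := by
    have := Matrix.submatrix_mul_equiv (d 0) (1 : Matrix (Fin (p 1)) (Fin (p 1)) A) id (Equiv.refl _) e1
    rw [Matrix.mul_one] at this
    exact this.symm
  have hE' : (d 0).submatrix id e1 * E' = d 0 := by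
    have := Matrix.submatrix_mul_equiv (d 0) (1 : Matrix (Fin (p 1)) (Fin (p 1)) A) id e1 id
    rw [Matrix.mul_one] at this
    exact this
  have hfv : ∀ {n : ℕ} (x : Fin n → A), f • x = 0 → x = 0 := by
    intro n x hx
    ext i
    exact hf _ (by simpa using congrFun hx i)
  obtain ⟨φ, hφ0', hφP, hφR⟩ := exists_seq
    (X := fun i => Matrix (Fin (p (i + 1))) (Fin (q i)) A)
    (fun i φ => (∀ a b, φ a b ∈ J) ∧ ∃ Y : Matrix (Fin (p (i + 1))) (Fin (q (i + 1))) A, d i * (φ * δ i - f • Y) = 0)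
    (fun i φ φ' => ∃ W : Matrix (Fin (p (i + 1))) (Fin (q (i + 1))) A, d (i + 1) * φ' = φ * δ i - f • W)
    (φ0 * θ) (by
      refine ⟨fun a b => ?_, E, ?_⟩
      · rw [Matrix.mul_apply]
        exact J.sum_mem fun j _ => J.mul_mem_right _ (hφ0J _ _)
      · rw [Matrix.mul_sub, ← Matrix.mul_assoc, ← Matrix.mul_assoc, hφ0, Matrix.mul_smul, ← hE,
          Matrix.smul_mul, Matrix.one_mul, Matrix.smul_mul, hθδ, sub_self])
    (by
      rintro i φ ⟨hJ, Y, hY⟩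
      obtain ⟨φ', hφ', hφ'J⟩ := exists_matrix (d (i + 1)) (φ * δ i - f • Y) (fun w => ∀ a, w a ∈ J)
        (fun j => by
          refine hexJ i _ (fun a => ?_) ?_
          · rw [Matrix.mulVec_single_one]
            simp only [Matrix.col_apply, Matrix.sub_apply, Matrix.smul_apply, smul_eq_mul,
              Matrix.mul_apply]
            exact J.sub_mem (J.sum_mem fun j _ => J.mul_mem_right _ (hJ _ _)) (J.mul_mem_right _ hfJ)
          · rw [Matrix.mulVec_mulVec, hY, Matrix.zero_mulVec])
      refine ⟨φ', ⟨fun a b => hφ'J b a, ?_⟩, Y, hφ'.symm⟩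
      obtain ⟨Z, hZ⟩ := hδδ i
      have key : d (i + 1) * (φ' * δ (i + 1)) = f • (φ * Z - Y * δ (i + 1)) := by
        rw [← Matrix.mul_assoc, ← hφ', Matrix.sub_mul, Matrix.mul_assoc, hZ, smul_sub,
          Matrix.mul_smul, Matrix.smul_mul]
      obtain ⟨Y', hY', -⟩ := exists_matrix (d (i + 1)) (φ * Z - Y * δ (i + 1)) (fun _ => True)
        (fun j => by
          obtain ⟨w, hw⟩ := hex i ((φ * Z - Y * δ (i + 1)) *ᵥ Pi.single j 1) (by
            apply hfv
            rw [← Matrix.mulVec_smul, ← Matrix.smul_mulVec, ← key, Matrix.mulVec_mulVec,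
              ← Matrix.mul_assoc, hdd, Matrix.zero_mul, Matrix.zero_mulVec])
          exact ⟨w, hw, trivial⟩)
      exact ⟨Y', by rw [Matrix.mul_sub, key, hY', Matrix.mul_smul, sub_self]⟩)
  exact ⟨{ q := q, δ := δ, φ := φ, θ := θ, θ' := θ', hθ := hθ, hθ' := hθ', hδδ := hδδ
           hδex := fun i v u h => by
             obtain ⟨w, hw⟩ := hδex i v u h
             exact ⟨w, 0, by simpa using hw⟩
           hJ := fun i => (hφP i).1
           hY := ⟨E, by rw [hθδ, hE]⟩
           hY' := ⟨E', 0, by rw [hθδ, hE', smul_zero, add_zero]⟩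
           hφ0 := by rw [hφ0', ← Matrix.mul_assoc, hφ0, Matrix.smul_mul, Matrix.one_mul]
           hφ := hφR }⟩

theorem exists_lift {A A' : Type} [CommRing A] [CommRing A'] (π : A →+* A')
    (hπ : Function.Surjective π) {n : ℕ} (v : Fin n → A') : ∃ u : Fin n → A, v = π ∘ u := by
  choose g hg using hπ
  exact ⟨g ∘ v, by ext; simp [hg]⟩

theorem map_mulVec' {A A' : Type} [CommRing A] [CommRing A'] (π : A →+* A') {a b : ℕ}
    (X : Matrix (Fin a) (Fin b) A) (v : Fin b → A) : X.map π *ᵥ (π ∘ v) = π ∘ (X *ᵥ v) := by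
  ext i
  simp [Matrix.mulVec, dotProduct]

/-- Base change of the data along the quotient by an element `h` that is regular on everything. -/
theorem GD.baseChange {A A' : Type} [CommRing A] [CommRing A'] (π : A →+* A')
    (hπ : Function.Surjective π) (h : A) (hker : ∀ x, π x = 0 → ∃ y, x = h * y) (hh : π h = 0)
    (J : Ideal A) (J' : Ideal A') (hJJ' : ∀ x ∈ J, π x ∈ J') (f : A) (f' : A') (hff' : π f = f')
    (p : ℕ → ℕ) (d : ∀ i, Matrix (Fin (p i)) (Fin (p (i + 1))) A)
    (d' : ∀ i, Matrix (Fin (p i)) (Fin (p (i + 1))) A') (hd' : ∀ i, (d i).map π = d' i)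
    (hf : ∀ x y, h * x = f * y → ∃ z, x = f * z)
    (hK : ∀ v w, h • v = d 0 *ᵥ w → ∃ u, v = d 0 *ᵥ u)
    (G : GD A J f p d) : Nonempty (GD A' J' f' p d') := by
  obtain ⟨q, δ, φ, θ, θ', hθ, hθ', hδδ, hδex, hJ, hY, hY', hφ0, hφ⟩ := G
  subst hff'
  have hsmul : ∀ {a b : ℕ} (r : A) (X : Matrix (Fin a) (Fin b) A),
      (r • X).map π = π r • X.map π := by
    intro a b r X
    ext i j
    simp
  have hmod : ∀ {n : ℕ} (v u : Fin n → A), π ∘ v = π f • (π ∘ u) → ∃ t, v = f • u + h • t := by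
    intro n v u hvu
    have : ∀ i, ∃ y, v i - f * u i = h * y := fun i => hker _ (by
      have := congrFun hvu i
      simpa [sub_eq_zero] using this)
    choose t ht using this
    exact ⟨t, by ext i; simp [← ht]⟩
  have hfv : ∀ {n : ℕ} (x y : Fin n → A), h • x = f • y → ∃ z, x = f • z := by
    intro n x y hxy
    have : ∀ i, ∃ z, x i = f * z := fun i => hf _ _ (by simpa using congrFun hxy i)
    choose z hz using this
    exact ⟨z, by ext i; simp [hz]⟩
  have hred : ∀ i (t u v : _), δ i *ᵥ v = f • u + h • t → ∃ s z, t = δ i *ᵥ s + f • z := by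
    intro i
    cases i with
    | zero =>
      intro t u v hv
      obtain ⟨Y, hY⟩ := hY
      obtain ⟨Y', Z', hY'⟩ := hY'
      obtain ⟨x, hx⟩ := hK (θ *ᵥ t) (Y *ᵥ v - φ 0 *ᵥ u) (by
        rw [Matrix.mulVec_sub, Matrix.mulVec_mulVec, Matrix.mulVec_mulVec, ← hY, hφ0,
          ← Matrix.mulVec_mulVec, hv, Matrix.mulVec_add, Matrix.mulVec_smul, Matrix.mulVec_smul,
          Matrix.smul_mulVec]
        abel)
      refine ⟨Y' *ᵥ x, θ' *ᵥ Z' *ᵥ x, ?_⟩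
      have := congrArg (θ' *ᵥ ·) hx
      simp only [Matrix.mulVec_mulVec, hθ', Matrix.one_mulVec] at this
      rw [this]
      conv_lhs => rw [hY']
      rw [Matrix.mul_add, Matrix.mul_assoc, ← Matrix.mul_assoc, hθ', Matrix.one_mul,
        Matrix.add_mulVec, Matrix.mulVec_mulVec, Matrix.mul_smul, Matrix.smul_mulVec,
        Matrix.mulVec_mulVec]
    | succ i =>
      intro t u v hv
      obtain ⟨Z, hZ⟩ := hδδ i
      obtain ⟨z, hz⟩ := hfv (δ i *ᵥ t) (Z *ᵥ v - δ i *ᵥ u) (by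
        have := congrArg (δ i *ᵥ ·) hv
        simp only [Matrix.mulVec_mulVec, hZ, Matrix.mulVec_add, Matrix.mulVec_smul,
          Matrix.smul_mulVec] at this
        rw [smul_sub, this]
        abel)
      exact hδex i t z hz
  refine ⟨{ q := q, δ := fun i => (δ i).map π, φ := fun i => (φ i).map π, θ := θ.map π
            θ' := θ'.map π
            hθ := by rw [← Matrix.map_mul, hθ]; simp
            hθ' := by rw [← Matrix.map_mul, hθ']; simp
            hδδ := fun i => by
              obtain ⟨Z, hZ⟩ := hδδ i
              exact ⟨Z.map π, by rw [← Matrix.map_mul, hZ, hsmul]⟩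
            hδex := ?_
            hJ := fun i a b => hJJ' _ (hJ i a b)
            hY := by
              obtain ⟨Y, hY⟩ := hY
              exact ⟨Y.map π, by rw [← hd', ← Matrix.map_mul, ← Matrix.map_mul, hY]⟩
            hY' := by
              obtain ⟨Y, Z, hY⟩ := hY'
              refine ⟨Y.map π, Z.map π, ?_⟩
              rw [← hd', ← Matrix.map_mul, ← Matrix.map_mul, ← hsmul,
                ← Matrix.map_add π (map_add π), ← hY]
            hφ0 := by rw [← hd', ← Matrix.map_mul, hφ0, hsmul]
            hφ := fun i => by
              obtain ⟨W, hW⟩ := hφ i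
              refine ⟨W.map π, ?_⟩
              rw [← hd', ← Matrix.map_mul, hW, ← Matrix.map_mul, ← hsmul,
                ← Matrix.map_sub π (map_sub π)] }⟩
  intro i v' u' hv'
  obtain ⟨v, rfl⟩ := exists_lift π hπ v'
  obtain ⟨u, rfl⟩ := exists_lift π hπ u'
  rw [map_mulVec'] at hv'
  obtain ⟨t, ht⟩ := hmod _ _ hv'
  obtain ⟨s, z, hs⟩ := hred i t u v ht
  obtain ⟨w, z', hw⟩ := hδex i (v - h • s) (u + h • z) (by
    rw [Matrix.mulVec_sub, ht, Matrix.mulVec_smul, hs, smul_add, smul_add, smul_comm f h z]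
    abel)
  refine ⟨π ∘ w, π ∘ z', ?_⟩
  rw [map_mulVec']
  ext a
  have := congrArg π (congrFun hw a)
  simpa [hh] using this

end Shamash
namespace Shamash

open Matrix Polynomial

/-- The vector of `k`-th coefficients of a vector of polynomials. -/
def cf {A : Type} [CommRing A] {n : ℕ} (k : ℕ) (v : Fin n → A[X]) : Fin n → A :=
  fun a => (v a).coeff k

theorem cf_mulVec {A : Type} [CommRing A] {a b : ℕ} (X : Matrix (Fin a) (Fin b) A) (k : ℕ)
    (v : Fin b → A[X]) : cf k (X.map (C : A →+* A[X]) *ᵥ v) = X *ᵥ cf k v := by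
  ext i
  simp [cf, Matrix.mulVec, dotProduct]

theorem cf_ext {A : Type} [CommRing A] {n : ℕ} (v w : Fin n → A[X]) (h : ∀ k, cf k v = cf k w) :
    v = w := by
  ext a k
  exact congrFun (h k) a

theorem cf_bound {A : Type} [CommRing A] {n : ℕ} (v : Fin n → A[X]) :
    ∃ N, ∀ k, N ≤ k → cf k v = 0 := by
  refine ⟨(Finset.univ.sup fun a => (v a).natDegree) + 1, fun k hk => ?_⟩
  ext a
  apply Polynomial.coeff_eq_zero_of_natDegree_lt
  have := Finset.le_sup (f := fun a => (v a).natDegree) (Finset.mem_univ a)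
  exact lt_of_le_of_lt this (by omega)

theorem poly_lift {A : Type} [CommRing A] {a b : ℕ} (X : Matrix (Fin a) (Fin b) A)
    (v : Fin a → A[X]) (P : ℕ → (Fin b → A) → Prop) (hP0 : ∀ k, P k 0)
    (h : ∀ k, ∃ w, cf k v = X *ᵥ w ∧ P k w) :
    ∃ W, v = X.map (C : A →+* A[X]) *ᵥ W ∧ ∀ k, P k (cf k W) := by
  choose w hw hP using h
  obtain ⟨N, hN⟩ := cf_bound v
  let W : Fin b → A[X] := fun a => ∑ k ∈ Finset.range N, Polynomial.monomial k (w k a)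
  have hW : ∀ k, cf k W = if k < N then w k else 0 := by
    intro k
    ext a
    simp only [cf, W, Polynomial.finsetSum_coeff, Polynomial.coeff_monomial, Finset.sum_ite_eq',
      Finset.mem_range]
    split_ifs <;> simp
  refine ⟨W, cf_ext _ _ fun k => ?_, fun k => ?_⟩
  · rw [cf_mulVec, hW]
    split_ifs with hk
    · exact hw k
    · rw [hN k (by omega), Matrix.mulVec_zero]
  · rw [hW]
    split_ifs
    · exact hP k
    · exact hP0 k

theorem poly_regular {A : Type} [CommRing A] (b : A) (F : A[X])
    (hF : ∀ x, F.eval b * x = 0 → x = 0) (G : A[X]) (hG : F * G = 0) : G = 0 := by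
  by_contra hne
  obtain ⟨w, hw, hw'⟩ := Polynomial.exists_eq_pow_rootMultiplicity_mul_and_not_dvd G hne b
  rw [hw, mul_left_comm] at hG
  have hm : ((X - C b) ^ rootMultiplicity b G).Monic := (monic_X_sub_C b).pow _
  have h1 : F * w = 0 := by
    have := hm.mul_right_eq_zero_iff (q := F * w)
    exact this.1 hG
  apply hw'
  rw [Polynomial.dvd_iff_isRoot]
  apply hF
  rw [← Polynomial.eval_mul, h1, Polynomial.eval_zero]

theorem GD.exists_of_sum (r : ℕ) : ∀ {A : Type} [CommRing A] [IsNoetherianRing A] (J0 : Ideal A)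
    (p : ℕ → ℕ) (d : ∀ i, Matrix (Fin (p i)) (Fin (p (i + 1))) A)
    (_ : ∀ i, d i * d (i + 1) = 0)
    (_ : ∀ i v, d i *ᵥ v = 0 → ∃ w, v = d (i + 1) *ᵥ w)
    (_ : ∀ i v, (∀ a, v a ∈ J0) → d i *ᵥ v = 0 → ∃ w, v = d (i + 1) *ᵥ w ∧ ∀ a, w a ∈ J0)
    (c : A) (_ : c ∈ J0)
    (φ0 : Matrix (Fin (p 1)) (Fin (p 0)) A) (_ : ∀ a b, φ0 a b ∈ J0)
    (_ : d 0 * φ0 = c • (1 : Matrix (Fin (p 0)) (Fin (p 0)) A))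
    (a b : Fin r → A)
    (_ : ∀ j, ∃ α : Matrix (Fin (p 1)) (Fin (p 0)) A,
      d 0 * α = a j • (1 : Matrix (Fin (p 0)) (Fin (p 0)) A))
    (_ : ∀ x, (c + ∑ j, a j * b j) * x = 0 → x = 0)
    (J : Ideal A) (_ : J0 ≤ J) (_ : ∀ j, b j ∈ J),
    Nonempty (GD A J (c + ∑ j, a j * b j) p d) := by
  induction r with
  | zero =>
    intro A _ _ J0 p d hdd hex hexJ c hc φ0 hφJ hφ a b ha hf J hJ hb
    simp only [Finset.univ_eq_empty, Finset.sum_empty, add_zero] at hf ⊢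
    obtain ⟨G⟩ := GD.generic J0 c p d hdd hex hexJ hc hf φ0 hφJ hφ
    exact ⟨{ G with hJ := fun i a b => hJ (G.hJ i a b) }⟩
  | succ r ih =>
    intro A _ _ J0 p d hdd hex hexJ c hc φ0 hφJ hφ a b ha hf J hJ hb
    obtain ⟨α, hα⟩ := ha 0
    let Cr : A →+* A[X] := C
    let J0' : Ideal A[X] := J0.comap Polynomial.constantCoeff
    let d' : ∀ i, Matrix (Fin (p i)) (Fin (p (i + 1))) A[X] := fun i => (d i).map Cr
    let c' : A[X] := C c + C (a 0) * X
    let φ0' : Matrix (Fin (p 1)) (Fin (p 0)) A[X] := φ0.map Cr + (X : A[X]) • α.map Cr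
    have hsmul : ∀ {m n : ℕ} (r : A) (X : Matrix (Fin m) (Fin n) A),
        (r • X).map Cr = Cr r • X.map Cr := by
      intro m n r X
      ext i j
      simp
    have hF : (c' + ∑ j : Fin r, C (a j.succ) * C (b j.succ)).eval (b 0) = c + ∑ j, a j * b j := by
      simp [c', Polynomial.eval_finsetSum, Fin.sum_univ_succ, add_assoc]
    have hJ0' : ∀ x : A[X], x ∈ J0' ↔ x.coeff 0 ∈ J0 := fun x => Iff.rfl
    obtain ⟨G⟩ := ih (A := A[X]) J0' p d'
      (fun i => by
        simp only [d']
        rw [← Matrix.map_mul, hdd]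
        simp)
      (fun i v hv => by
        obtain ⟨W, hW, -⟩ := poly_lift (d (i + 1)) v (fun _ _ => True) (fun _ => trivial) (fun k => by
          obtain ⟨w, hw⟩ := hex i (cf k v) (by
            rw [← cf_mulVec]
            show cf k (d' i *ᵥ v) = 0
            rw [hv]
            ext; simp [cf])
          exact ⟨w, hw, trivial⟩)
        exact ⟨W, hW⟩)
      (fun i v hvJ hv => by
        have hk : ∀ k, d i *ᵥ cf k v = 0 := fun k => by
          rw [← cf_mulVec]
          show cf k (d' i *ᵥ v) = 0
          rw [hv]
          ext; simp [cf]
        obtain ⟨W, hW, hWJ⟩ := poly_lift (d (i + 1)) v (fun k w => k = 0 → ∀ a, w a ∈ J0)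
          (fun _ _ _ => J0.zero_mem) (fun k => by
            by_cases hk0 : k = 0
            · subst hk0
              obtain ⟨w, hw, hwJ⟩ := hexJ i (cf 0 v) (fun a => hvJ a) (hk 0)
              exact ⟨w, hw, fun _ => hwJ⟩
            · obtain ⟨w, hw⟩ := hex i (cf k v) (hk k)
              exact ⟨w, hw, fun h => absurd h hk0⟩)
        exact ⟨W, hW, fun a => hWJ 0 rfl a⟩)
      c' (by rw [hJ0']; simpa [c'] using hc)
      φ0' (fun i j => by rw [hJ0']; simpa [φ0', Cr] using hφJ i j)
      (by
        simp only [φ0', d', c']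
        rw [Matrix.mul_add, Matrix.mul_smul, ← Matrix.map_mul, ← Matrix.map_mul, hφ, hα, hsmul,
          hsmul, Matrix.map_one Cr (map_zero _) (map_one _), smul_smul, ← add_smul, mul_comm X])
      (fun j => C (a j.succ)) (fun j => C (b j.succ))
      (fun j => by
        obtain ⟨α, hα⟩ := ha j.succ
        refine ⟨α.map Cr, ?_⟩
        simp only [d']
        rw [← Matrix.map_mul, hα, hsmul, Matrix.map_one Cr (map_zero _) (map_one _)])
      (fun x hx => poly_regular (b 0) _ (by rw [hF]; exact hf) x hx)
      (J.comap (Polynomial.evalRingHom (b 0)))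
      (fun x hx => by
        rw [hJ0'] at hx
        rw [Ideal.mem_comap, Polynomial.coe_evalRingHom, ← Polynomial.divX_mul_X_add x,
          Polynomial.eval_add, Polynomial.eval_mul, Polynomial.eval_X, Polynomial.eval_C]
        exact J.add_mem (J.mul_mem_left _ (hb 0)) (hJ hx))
      (fun j => by simpa using hb j.succ)
    refine GD.baseChange (Polynomial.evalRingHom (b 0)) (fun x => ⟨C x, by simp⟩) (X - C (b 0))
      (fun x hx => by
        obtain ⟨y, hy⟩ := Polynomial.dvd_iff_isRoot.2 (show x.IsRoot (b 0) from hx)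
        exact ⟨y, hy⟩) (by simp) _ J (fun x hx => hx) _ _ hF p d' d
      (fun i => by ext; simp [d', Cr]) ?_ ?_ G
    · intro x y hxy
      have hy : y.eval (b 0) = 0 := by
        apply hf
        rw [← hF, ← Polynomial.eval_mul, ← hxy]
        simp
      obtain ⟨w, rfl⟩ := Polynomial.dvd_iff_isRoot.2 (show y.IsRoot (b 0) from hy)
      refine ⟨w, ?_⟩
      rw [mul_left_comm, ← sub_eq_zero, ← mul_sub] at hxy
      have := ((monic_X_sub_C (b 0)).mul_right_eq_zero_iff).1 hxy
      exact sub_eq_zero.1 this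
    · intro v w hvw
      have hrec : ∀ k, cf k v = b 0 • cf (k + 1) v + d 0 *ᵥ cf (k + 1) w := by
        intro k
        rw [← cf_mulVec]
        show _ = _ + cf (k + 1) (d' 0 *ᵥ w)
        rw [← hvw]
        ext i
        simp [cf, sub_mul, Polynomial.coeff_X_mul]
      obtain ⟨N, hN⟩ := cf_bound v
      have hall : ∀ m k, N ≤ k + m → ∃ u, cf k v = d 0 *ᵥ u := by
        intro m
        induction m with
        | zero => intro k hk; exact ⟨0, by rw [hN k (by omega), Matrix.mulVec_zero]⟩
        | succ m ihm =>
          intro k hk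
          obtain ⟨u, hu⟩ := ihm (k + 1) (by omega)
          refine ⟨b 0 • u + cf (k + 1) w, ?_⟩
          rw [hrec k, hu, Matrix.mulVec_add, Matrix.mulVec_smul]
      obtain ⟨W, hW, -⟩ := poly_lift (d 0) v (fun _ _ => True) (fun _ => trivial) (fun k => by
        obtain ⟨u, hu⟩ := hall N k (by omega)
        exact ⟨u, hu, trivial⟩)
      exact ⟨W, hW⟩

end Shamash

namespace Shamash

open Matrix

/-- Action of a matrix over `B` on vectors with entries in a `B`-module. -/
def act {B : Type} [CommRing B] (M : Type) [AddCommGroup M] [Module B M] {a b : Type} [Fintype b]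
    (X : Matrix a b B) : (b → M) →ₗ[B] (a → M) where
  toFun v i := ∑ j, X i j • v j
  map_add' v w := by
    ext i
    simp [Finset.sum_add_distrib]
  map_smul' c v := by
    ext i
    simp [Finset.smul_sum, smul_comm c]

theorem act_apply {B : Type} [CommRing B] (M : Type) [AddCommGroup M] [Module B M] {a b : Type}
    [Fintype b] (X : Matrix a b B) (v : b → M) (i : a) : act M X v i = ∑ j, X i j • v j := rfl

/-- Subquotient `N / (N ∩ R)`. -/
abbrev Hsub {B : Type} [CommRing B] {X : Type} [AddCommGroup X] [Module B X]
    (N R : Submodule B X) : Type := N ⧸ R.comap N.subtype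

noncomputable def Hsub.equiv {B : Type} [CommRing B] {X Y : Type} [AddCommGroup X] [Module B X]
    [AddCommGroup Y] [Module B Y] (N R : Submodule B X) (N' R' : Submodule B Y) (e : X ≃ₗ[B] Y)
    (hN : ∀ x, x ∈ N ↔ e x ∈ N') (hR : ∀ x, x ∈ R ↔ e x ∈ R') : Hsub N R ≃ₗ[B] Hsub N' R' := by
  have hN' : N.map (e : X →ₗ[B] Y) = N' := by
    ext y
    constructor
    · rintro ⟨x, hx, rfl⟩
      exact (hN x).1 hx
    · intro hy
      exact ⟨e.symm y, (hN _).2 (by simpa using hy), by simp⟩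
  refine Submodule.Quotient.equiv _ _ ((e.submoduleMap N).trans (LinearEquiv.ofEq _ _ hN')) ?_
  ext ⟨y, hy⟩
  constructor
  · rintro ⟨⟨x, hx⟩, hxR, h⟩
    have : e x = y := congrArg Subtype.val h
    show y ∈ R'
    rw [← this]
    exact (hR x).1 hxR
  · intro h
    refine ⟨⟨e.symm y, (hN _).2 (by simpa using hy)⟩, ?_, ?_⟩
    · show e.symm y ∈ R
      exact (hR _).2 (by simpa using h)
    · apply Subtype.ext
      show e (e.symm y) = y
      simp

section cplx

variable {B : Type} [CommRing B] (ι : ℕ → Type) [∀ i, Fintype (ι i)]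
  (d : ∀ i, Matrix (ι i) (ι (i + 1)) B) (M : Type) [AddCommGroup M] [Module B M]

/-- Cycles of the complex `M ⊗ F`. -/
def Zc : ∀ i, Submodule B (ι i → M)
  | 0 => ⊤
  | i + 1 => LinearMap.ker (act M (d i))

/-- Boundaries of the complex `M ⊗ F`. -/
def Bc (i : ℕ) : Submodule B (ι i → M) := LinearMap.range (act M (d i))

end cplx

theorem homology_equiv {B : Type} [CommRing B] (S : ShortComplex (ModuleCat.{0} B)) :
    Nonempty (S.homology ≃ₗ[B] Hsub (LinearMap.ker S.g.hom) (LinearMap.range S.f.hom)) := by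
  refine ⟨(S.moduleCatHomologyIso.toLinearEquiv).trans (Submodule.quotEquivOfEq _ _ ?_)⟩
  ext ⟨x, hx⟩
  constructor
  · rintro ⟨y, hy⟩
    exact ⟨y, congrArg Subtype.val hy⟩
  · rintro ⟨y, hy⟩
    exact ⟨y, Subtype.ext hy⟩

noncomputable def resCx {B : Type} [CommRing B] (ι : ℕ → Type) [∀ i, Fintype (ι i)]
    (d : ∀ i, Matrix (ι i) (ι (i + 1)) B) (hdd : ∀ i, d i * d (i + 1) = 0) :
    ChainComplex (ModuleCat.{0} B) ℕ :=
  ChainComplex.of (fun i => ModuleCat.of B (ι i → B)) (fun i => ModuleCat.ofHom (d i).mulVecLin)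
    (fun i => by
      ext1
      rw [ModuleCat.hom_comp]
      simp only [ModuleCat.hom_ofHom, ModuleCat.hom_zero]
      rw [← Matrix.mulVecLin_mul, hdd]
      exact Matrix.mulVecLin_zero)

theorem resCx_d {B : Type} [CommRing B] (ι : ℕ → Type) [∀ i, Fintype (ι i)]
    (d : ∀ i, Matrix (ι i) (ι (i + 1)) B) (hdd : ∀ i, d i * d (i + 1) = 0) (i : ℕ) :
    (resCx ι d hdd).d (i + 1) i = ModuleCat.ofHom (d i).mulVecLin := by
  simp [resCx]

noncomputable def projRes {B : Type} [CommRing B] (K : Type) [AddCommGroup K] [Module B K]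
    (ι : ℕ → Type) [∀ i, Fintype (ι i)]
    (d : ∀ i, Matrix (ι i) (ι (i + 1)) B) (hdd : ∀ i, d i * d (i + 1) = 0)
    (hex : ∀ i v, d i *ᵥ v = 0 → ∃ w, v = d (i + 1) *ᵥ w)
    (ε : (ι 0 → B) →ₗ[B] K) (hε : Function.Surjective ε)
    (hε0 : ∀ v, ε v = 0 ↔ ∃ w, v = d 0 *ᵥ w) : ProjectiveResolution (ModuleCat.of B K) where
  complex := resCx ι d hdd
  projective i := by
    have : Projective (ModuleCat.of B (ι i → B)) := by
      rw [← IsProjective.iff_projective]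
      infer_instance
    exact this
  π := (ChainComplex.toSingle₀Equiv _ _).symm ⟨ModuleCat.ofHom ε, by
    rw [resCx_d]
    ext1
    refine LinearMap.ext fun w => ?_
    exact (hε0 _).2 ⟨w, rfl⟩⟩
  quasiIso := ⟨fun n => by
    cases n with
    | zero =>
      rw [ChainComplex.quasiIsoAt₀_iff, ShortComplex.quasiIso_iff_of_zeros']
      · constructor
        · rw [ShortComplex.moduleCat_exact_iff]
          intro x hx
          obtain ⟨w, hw⟩ := (hε0 x).1 hx
          refine ⟨w, ?_⟩
          show (resCx ι d hdd).d 1 0 w = x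
          rw [resCx_d]
          exact hw.symm
        · exact (ModuleCat.epi_iff_surjective (ModuleCat.ofHom ε)).2 hε
      all_goals rfl
    | succ n =>
      rw [quasiIsoAt_iff_exactAt']
      · rw [HomologicalComplex.exactAt_iff' _ (n + 1 + 1) (n + 1) n (by simp) (by simp)]
        rw [ShortComplex.moduleCat_exact_iff]
        intro x hx
        have hx' : (resCx ι d hdd).d (n + 1) n x = 0 := hx
        rw [resCx_d] at hx'
        obtain ⟨w, hw⟩ := hex n x hx'
        refine ⟨w, ?_⟩
        show (resCx ι d hdd).d (n + 1 + 1) (n + 1) w = x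
        rw [resCx_d]
        exact hw.symm
      · apply ChainComplex.exactAt_succ_single_obj⟩

theorem tor_equiv {B : Type} [CommRing B] (M K : Type) [AddCommGroup K] [Module B K]
    [AddCommGroup M] [Module B M]
    (ι : ℕ → Type) [∀ i, Fintype (ι i)] [∀ i, DecidableEq (ι i)]
    (d : ∀ i, Matrix (ι i) (ι (i + 1)) B) (hdd : ∀ i, d i * d (i + 1) = 0)
    (hex : ∀ i v, d i *ᵥ v = 0 → ∃ w, v = d (i + 1) *ᵥ w)
    (ε : (ι 0 → B) →ₗ[B] K) (hε : Function.Surjective ε)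
    (hε0 : ∀ v, ε v = 0 ↔ ∃ w, v = d 0 *ᵥ w) (i : ℕ) :
    Nonempty ((((Tor (ModuleCat B) i).obj (ModuleCat.of B M)).obj (ModuleCat.of B K)) ≃ₗ[B]
      Hsub (Zc ι d M i) (Bc ι d M i)) := by
  let P := projRes K ι d hdd hex ε hε hε0
  let F := (MonoidalCategory.tensoringLeft (ModuleCat B)).obj (ModuleCat.of B M)
  let C := (F.mapHomologicalComplex (ComplexShape.down ℕ)).obj P.complex
  have e1 : (((Tor (ModuleCat B) i).obj (ModuleCat.of B M)).obj (ModuleCat.of B K)) ≃ₗ[B]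
    C.homology i := (P.isoLeftDerivedObj F i).toLinearEquiv
  have key : ∀ j (x : M ⊗[B] (ι (j + 1) → B)),
      TensorProduct.piScalarRight B B M (ι j) (C.d (j + 1) j x) =
        act M (d j) (TensorProduct.piScalarRight B B M (ι (j + 1)) x) := by
    intro j x
    have h : C.d (j + 1) j = MonoidalCategory.whiskerLeft (ModuleCat.of B M)
        (ModuleCat.ofHom (d j).mulVecLin) := by
      rw [← resCx_d ι d hdd]
      rfl
    rw [h]
    show TensorProduct.piScalarRight B B M (ι j) (LinearMap.lTensor M (d j).mulVecLin x) = _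
    clear h
    clear_value C
    induction x using TensorProduct.induction_on with
    | zero => simp only [map_zero]
    | add x y hx hy => simp only [map_add, hx, hy]
    | tmul m v =>
      ext a
      simp [act_apply, Matrix.mulVec, dotProduct, Finset.sum_smul, mul_smul]
  have key0 : C.d 0 0 = 0 := C.shape _ _ (by simp)
  have hB : ∀ j (x : M ⊗[B] (ι j → B)), x ∈ LinearMap.range (C.d (j + 1) j).hom ↔
      TensorProduct.piScalarRight B B M (ι j) x ∈ Bc ι d M j := by
    intro j x
    constructor
    · rintro ⟨y, rfl⟩
      exact ⟨_, (key j y).symm⟩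
    · rintro ⟨y, hy⟩
      refine ⟨(TensorProduct.piScalarRight B B M (ι (j + 1))).symm y, ?_⟩
      apply (TensorProduct.piScalarRight B B M (ι j)).injective
      refine (key j _).trans ?_
      rw [LinearEquiv.apply_symm_apply, hy]
  cases i with
  | zero =>
    obtain ⟨e2⟩ := homology_equiv (C.sc' 1 0 0)
    have e3 : C.homology 0 ≃ₗ[B] (C.sc' 1 0 0).homology :=
      (ShortComplex.homologyMapIso (C.isoSc' 1 0 0 (by simp) (by simp))).toLinearEquiv
    refine ⟨e1.trans (e3.trans (e2.trans (Hsub.equiv _ _ _ _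
      (TensorProduct.piScalarRight B B M (ι 0)) ?_ (hB 0))))⟩
    intro x
    have : C.d 0 0 x = 0 := by
      rw [key0]
      rfl
    exact ⟨fun _ => trivial, fun _ => this⟩
  | succ i =>
    obtain ⟨e2⟩ := homology_equiv (C.sc' (i + 1 + 1) (i + 1) i)
    have e3 : C.homology (i + 1) ≃ₗ[B] (C.sc' (i + 1 + 1) (i + 1) i).homology :=
      (ShortComplex.homologyMapIso (C.isoSc' (i + 1 + 1) (i + 1) i (by simp) (by simp))).toLinearEquiv
    refine ⟨e1.trans (e3.trans (e2.trans (Hsub.equiv _ _ _ _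
      (TensorProduct.piScalarRight B B M (ι (i + 1))) ?_ (hB (i + 1)))))⟩
    intro x
    show C.d (i + 1) i x = 0 ↔ act M (d i) _ = 0
    refine Iff.trans ?_ (Eq.congr_left (key i x))
    exact (LinearEquiv.map_eq_zero_iff _).symm

end Shamash

namespace Shamash

open Matrix

/-- Shifted ranks. -/
def q' (q : ℕ → ℕ) : ℕ → ℕ
  | 0 => 0
  | 1 => 0
  | i + 2 => q i

/-- Data over `B` reduced from `GD`. -/
structure BD (B : Type) [CommRing B] (p : ℕ → ℕ) (d : ∀ i, Matrix (Fin (p i)) (Fin (p (i + 1))) B)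
    (q : ℕ → ℕ) (δ : ∀ i, Matrix (Fin (q i)) (Fin (q (i + 1))) B)
    (φ : ∀ i, Matrix (Fin (p (i + 1))) (Fin (q i)) B) : Prop where
  hdd : ∀ i, d i * d (i + 1) = 0
  hδδ : ∀ i, δ i * δ (i + 1) = 0
  hφ0 : d 0 * φ 0 = 0
  hφ : ∀ i, d (i + 1) * φ (i + 1) = φ i * δ i
  ha : ∀ i v, d (i + 1) *ᵥ v = 0 → ∃ w, v = d (i + 2) *ᵥ w
  hb : ∀ v, d 0 *ᵥ v = 0 → ∃ u w, v = φ 0 *ᵥ u + d 1 *ᵥ w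
  hc : ∀ v w, φ 0 *ᵥ v = d 1 *ᵥ w → ∃ z, v = δ 0 *ᵥ z
  hd : ∀ i v, δ i *ᵥ v = 0 → ∃ w, v = δ (i + 1) *ᵥ w

/-- Index types of the big resolution. -/
abbrev ι' (p q : ℕ → ℕ) (i : ℕ) : Type := Fin (p i) ⊕ Fin (q' q i)

section
variable {B : Type} [CommRing B] {p : ℕ → ℕ} {q : ℕ → ℕ}

def δ' (δ : ∀ i, Matrix (Fin (q i)) (Fin (q (i + 1))) B) :
    ∀ i, Matrix (Fin (q' q i)) (Fin (q' q (i + 1))) B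
  | 0 => 0
  | 1 => 0
  | i + 2 => - δ i

def φ' (φ : ∀ i, Matrix (Fin (p (i + 1))) (Fin (q i)) B) :
    ∀ i, Matrix (Fin (p i)) (Fin (q' q (i + 1))) B
  | 0 => 0
  | i + 1 => φ i

def D' (d : ∀ i, Matrix (Fin (p i)) (Fin (p (i + 1))) B)
    (δ : ∀ i, Matrix (Fin (q i)) (Fin (q (i + 1))) B)
    (φ : ∀ i, Matrix (Fin (p (i + 1))) (Fin (q i)) B) (i : ℕ) :
    Matrix (ι' p q i) (ι' p q (i + 1)) B :=
  Matrix.fromBlocks (d i) (φ' φ i) 0 (δ' δ i)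

variable {d : ∀ i, Matrix (Fin (p i)) (Fin (p (i + 1))) B}
    {δ : ∀ i, Matrix (Fin (q i)) (Fin (q (i + 1))) B}
    {φ : ∀ i, Matrix (Fin (p (i + 1))) (Fin (q i)) B}

theorem BD.dd (h : BD B p d q δ φ) (i : ℕ) : D' d δ φ i * D' d δ φ (i + 1) = 0 := by
  unfold D'
  rw [Matrix.fromBlocks_multiply]
  have h1 : d i * φ' φ (i + 1) + φ' φ i * δ' δ (i + 1) = 0 := by
    rcases i with _ | i
    · have e : φ' φ 0 * δ' δ (0 + 1) = 0 := Matrix.zero_mul _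
      rw [e, add_zero]
      exact h.hφ0
    · show d (i + 1) * φ (i + 1) + φ i * (- δ i) = 0
      rw [h.hφ, Matrix.mul_neg, add_neg_cancel]
  have h2 : δ' δ i * δ' δ (i + 1) = 0 := by
    rcases i with _ | _ | i
    · exact Matrix.zero_mul _
    · exact Matrix.zero_mul _
    · show (- δ i) * (- δ (i + 1)) = 0
      rw [Matrix.neg_mul, Matrix.mul_neg, h.hδδ]
      simp
  rw [h1, h2, h.hdd]
  simp

theorem BD.ex (h : BD B p d q δ φ) (i : ℕ) (v : ι' p q (i + 1) → B) (hv : D' d δ φ i *ᵥ v = 0) :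
    ∃ w, v = D' d δ φ (i + 1) *ᵥ w := by
  obtain ⟨x, s, rfl⟩ : ∃ x s, v = Sum.elim x s := ⟨v ∘ Sum.inl, v ∘ Sum.inr, by simp⟩
  unfold D' at hv
  rw [Matrix.fromBlocks_mulVec] at hv
  have hv1 : d i *ᵥ x + φ' φ i *ᵥ s = 0 := by
    ext a
    simpa using congrFun hv (Sum.inl a)
  have hv2 : δ' δ i *ᵥ s = 0 := by
    ext a
    simpa using congrFun hv (Sum.inr a)
  suffices ∃ x' s', x = d (i + 1) *ᵥ x' + φ' φ (i + 1) *ᵥ s' ∧ s = δ' δ (i + 1) *ᵥ s' by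
    obtain ⟨x', s', h1, h2⟩ := this
    refine ⟨Sum.elim x' s', ?_⟩
    unfold D'
    rw [Matrix.fromBlocks_mulVec]
    subst h1 h2
    simp
  rcases i with _ | i
  · have : d 0 *ᵥ x = 0 := by
      have e : φ' φ 0 *ᵥ s = 0 := Matrix.zero_mulVec _
      rw [e, add_zero] at hv1
      exact hv1
    obtain ⟨u, w, huw⟩ := h.hb x this
    refine ⟨w, u, ?_, ?_⟩
    · exact huw.trans (add_comm _ _)
    · funext a
      exact a.elim0
  · have hv1' : d (i + 1) *ᵥ x + φ i *ᵥ s = 0 := hv1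
    have hz : ∃ z, s = δ i *ᵥ z := by
      rcases i with _ | i
      · apply h.hc s (- x)
        rw [Matrix.mulVec_neg]
        exact eq_neg_of_add_eq_zero_right hv1'
      · apply h.hd
        have e : ∀ s : Fin (q (i + 1)) → B, (- δ i) *ᵥ s = 0 → δ i *ᵥ s = 0 := by
          intro s hs
          rw [Matrix.neg_mulVec] at hs
          exact neg_eq_zero.1 hs
        exact e s hv2
    obtain ⟨z, hz⟩ := hz
    have : d (i + 1) *ᵥ (x + φ (i + 1) *ᵥ z) = 0 := by
      rw [Matrix.mulVec_add, Matrix.mulVec_mulVec, h.hφ, ← Matrix.mulVec_mulVec]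
      have hz' : φ i *ᵥ δ i *ᵥ z = φ i *ᵥ s := by
        rw [hz]
      rw [hz']
      exact hv1'
    obtain ⟨w, hw⟩ := h.ha i _ this
    refine ⟨w, -z, ?_, ?_⟩
    · show x = d (i + 2) *ᵥ w + φ (i + 1) *ᵥ (- z)
      rw [← hw, Matrix.mulVec_neg]
      simp
    · show s = (- δ i) *ᵥ (- z)
      rw [Matrix.neg_mulVec_neg]
      exact hz

end

theorem mulVec_smul' {A : Type} [CommRing A] {a b : ℕ} (X : Matrix (Fin a) (Fin b) A) (f : A)
    (v : Fin b → A) : X *ᵥ (f • v) = f • (X *ᵥ v) := Matrix.mulVec_smul X f v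

theorem GD.toBD {A B : Type} [CommRing A] [CommRing B] (π : A →+* B)
    (hπ : Function.Surjective π) (f : A) (hker : ∀ x, π x = 0 ↔ ∃ y, x = f * y)
    (hf : ∀ x, f * x = 0 → x = 0) {J : Ideal A} {p : ℕ → ℕ}
    {d : ∀ i, Matrix (Fin (p i)) (Fin (p (i + 1))) A} (hdd : ∀ i, d i * d (i + 1) = 0)
    (hex : ∀ i v, d i *ᵥ v = 0 → ∃ w, v = d (i + 1) *ᵥ w) (G : GD A J f p d) :
    BD B p (fun i => (d i).map π) G.q (fun i => (G.δ i).map π) (fun i => (G.φ i).map π) := by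
  have hπf : π f = 0 := (hker f).2 ⟨1, by simp⟩
  have hz : ∀ {n : ℕ} (v : Fin n → A), π ∘ v = 0 → ∃ u, v = f • u := by
    intro n v hv
    choose u hu using fun i => (hker (v i)).1 (congrFun hv i)
    exact ⟨u, funext hu⟩
  have hz' : ∀ {n : ℕ} (v : Fin n → A), π ∘ (f • v) = 0 := by
    intro n v
    ext i
    simp [hπf]
  have hzm : ∀ {n m : ℕ} (v : Matrix (Fin n) (Fin m) A), (f • v).map π = 0 := by
    intro n m v
    ext i j
    simp [hπf]
  have hadd : ∀ {n : ℕ} (v w : Fin n → A), π ∘ (v + w) = π ∘ v + π ∘ w := by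
    intro n v w
    ext i
    simp
  have hf' : ∀ {n : ℕ} (v w : Fin n → A), f • v = f • w → v = w := by
    intro n v w h
    ext i
    have := congrFun h i
    simp only [Pi.smul_apply, smul_eq_mul] at this
    exact sub_eq_zero.1 (hf _ (by rw [mul_sub, this, sub_self]))
  constructor
  · intro i
    rw [← Matrix.map_mul, hdd]
    simp
  · intro i
    obtain ⟨Z, hZ⟩ := G.hδδ i
    rw [← Matrix.map_mul, hZ, hzm]
  · rw [← Matrix.map_mul, G.hφ0, hzm]
  · intro i
    obtain ⟨W, hW⟩ := G.hφ i
    rw [← Matrix.map_mul, ← Matrix.map_mul, hW]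
    ext a b
    simp [hπf]
  · intro i v hv
    obtain ⟨v, rfl⟩ := exists_lift π hπ v
    rw [map_mulVec'] at hv
    obtain ⟨u, hu⟩ := hz _ hv
    have h1 : d i *ᵥ u = 0 := by
      apply hf'
      rw [← mulVec_smul', ← hu, Matrix.mulVec_mulVec, hdd]
      simp
    obtain ⟨w, rfl⟩ := hex i u h1
    obtain ⟨z, hz2⟩ := hex (i + 1) (v - f • w) (by rw [Matrix.mulVec_sub, mulVec_smul', hu, sub_self])
    refine ⟨π ∘ z, ?_⟩
    rw [map_mulVec', ← hz2]
    ext a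
    simp [hπf]
  · intro v hv
    obtain ⟨v, rfl⟩ := exists_lift π hπ v
    rw [map_mulVec'] at hv
    obtain ⟨u, hu⟩ := hz _ hv
    obtain ⟨w, hw⟩ := hex 0 (v - G.φ 0 *ᵥ (G.θ' *ᵥ u)) (by
      rw [Matrix.mulVec_sub, hu, Matrix.mulVec_mulVec, G.hφ0, Matrix.smul_mulVec,
        Matrix.mulVec_mulVec, G.hθ, Matrix.one_mulVec, sub_self])
    refine ⟨π ∘ (G.θ' *ᵥ u), π ∘ w, ?_⟩
    rw [map_mulVec', map_mulVec', ← hadd, ← hw]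
    simp
  · intro v w hvw
    obtain ⟨v, rfl⟩ := exists_lift π hπ v
    obtain ⟨w, rfl⟩ := exists_lift π hπ w
    rw [map_mulVec', map_mulVec'] at hvw
    obtain ⟨u, hu⟩ := hz (G.φ 0 *ᵥ v - d 1 *ᵥ w) (by
      ext a
      simpa [sub_eq_zero] using congrFun hvw a)
    have h1 : G.θ *ᵥ v = d 0 *ᵥ u := by
      apply hf'
      rw [← mulVec_smul' (d 0), ← hu, Matrix.mulVec_sub, Matrix.mulVec_mulVec, Matrix.mulVec_mulVec, hdd,
        G.hφ0, Matrix.smul_mulVec]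
      simp
    obtain ⟨Y, Z, hYZ⟩ := G.hY'
    have h2 : v = G.δ 0 *ᵥ (Y *ᵥ u) + f • (G.θ' *ᵥ (Z *ᵥ u)) := by
      have : v = G.θ' *ᵥ (G.θ *ᵥ v) := by
        rw [Matrix.mulVec_mulVec, G.hθ', Matrix.one_mulVec]
      rw [this, h1, hYZ, Matrix.add_mulVec, Matrix.mulVec_add, Matrix.smul_mulVec, mulVec_smul',
        Matrix.mulVec_mulVec, Matrix.mulVec_mulVec, Matrix.mul_assoc, ← Matrix.mul_assoc G.θ',
        G.hθ', Matrix.one_mul, ← Matrix.mulVec_mulVec, ← Matrix.mulVec_mulVec]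
    refine ⟨π ∘ (Y *ᵥ u), ?_⟩
    rw [map_mulVec', h2, hadd, hz', add_zero]
  · intro i v hv
    obtain ⟨v, rfl⟩ := exists_lift π hπ v
    rw [map_mulVec'] at hv
    obtain ⟨u, hu⟩ := hz _ hv
    obtain ⟨w, z, hwz⟩ := G.hδex i v u hu
    refine ⟨π ∘ w, ?_⟩
    rw [map_mulVec', hwz, hadd, hz', add_zero]

end Shamash

namespace Shamash

open Matrix IsLocalRing

/-- Dimension of `k ⊗ H`. -/
noncomputable def nu (B : Type) [CommRing B] [IsLocalRing B] (H : Type) [AddCommGroup H]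
    [Module B H] : ℕ :=
  Module.finrank (ResidueField B) (ResidueField B ⊗[B] H)

theorem nu_congr {B : Type} [CommRing B] [IsLocalRing B] {H H' : Type} [AddCommGroup H]
    [Module B H] [AddCommGroup H'] [Module B H'] (e : H ≃ₗ[B] H') : nu B H = nu B H' :=
  LinearEquiv.finrank_eq (LinearEquiv.baseChange B (ResidueField B) H H' e)

theorem nu_prod {B : Type} [CommRing B] [IsLocalRing B] {H H' : Type} [AddCommGroup H]
    [Module B H] [AddCommGroup H'] [Module B H'] [Module.Finite B H] [Module.Finite B H'] :
    nu B (H × H') = nu B H + nu B H' := by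
  unfold nu
  rw [LinearEquiv.finrank_eq (TensorProduct.prodRight B (ResidueField B) (ResidueField B) H H'),
    Module.finrank_prod]

theorem nu_subsingleton {B : Type} [CommRing B] [IsLocalRing B] {H : Type} [AddCommGroup H]
    [Module B H] [Subsingleton H] : nu B H = 0 := by
  unfold nu
  have : Subsingleton (ResidueField B ⊗[B] H) := by infer_instance
  exact Module.finrank_zero_of_subsingleton

theorem mem_max_iff {A B : Type} [CommRing A] [IsLocalRing A] [CommRing B] [IsLocalRing B]
    (π : A →+* B) (hπ : Function.Surjective π) (a : A) :
    π a ∈ maximalIdeal B ↔ a ∈ maximalIdeal A := by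
  have := IsLocalHom.of_surjective π hπ
  rw [mem_maximalIdeal, mem_maximalIdeal, map_mem_nonunits_iff]

theorem nu_change (A B : Type) [CommRing A] [IsLocalRing A] [CommRing B] [IsLocalRing B]
    [Algebra A B] (hs : Function.Surjective (algebraMap A B)) (H : Type) [AddCommGroup H]
    [Module A H] [Module B H] [IsScalarTower A B H] : nu A H = nu B H := by
  have := IsLocalHom.of_surjective (algebraMap A B) hs
  let σ : ResidueField A →+* ResidueField B := ResidueField.map (algebraMap A B)
  have hσ : Function.Bijective σ := by
    refine ⟨σ.injective, fun y => ?_⟩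
    obtain ⟨b, rfl⟩ := residue_surjective y
    obtain ⟨a, rfl⟩ := hs b
    exact ⟨residue A a, ResidueField.map_residue _ _⟩
  let σl : ResidueField A ≃ₗ[A] ResidueField B :=
    LinearEquiv.ofBijective
      { toFun := σ
        map_add' := map_add σ
        map_smul' := by
          intro a x
          obtain ⟨x, rfl⟩ := residue_surjective x
          rw [Algebra.smul_def, Algebra.smul_def, map_mul]
          rfl } hσ
  have := TensorProduct.CompatibleSMul.of_algebraMap_surjective (ResidueField B) H hs
  let e1 : ResidueField A ⊗[A] H ≃ₗ[A] ResidueField B ⊗[A] H :=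
    TensorProduct.congr σl (LinearEquiv.refl A H)
  let e2 : ResidueField B ⊗[B] H ≃ₗ[ResidueField B] ResidueField B ⊗[A] H :=
    TensorProduct.equivOfCompatibleSMul A B (ResidueField B) (ResidueField B) H
  have h := rank_eq_of_equiv_equiv σ (e1.toAddEquiv.trans e2.symm.toAddEquiv) hσ (by
    intro r m
    show e2.symm (e1 (r • m)) = σ r • e2.symm (e1 m)
    rw [← map_smul]
    congr 1
    induction m using TensorProduct.induction_on with
    | zero => simp
    | add x y hx hy => simp only [smul_add, map_add, hx, hy]
    | tmul x y =>
      rw [TensorProduct.smul_tmul']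
      show σ (r • x) ⊗ₜ[A] y = σ r • (σ x ⊗ₜ[A] y)
      rw [TensorProduct.smul_tmul', smul_eq_mul, smul_eq_mul, map_mul])
  unfold nu Module.finrank
  rw [h]

theorem betti_eq {B : Type} [CommRing B] [IsLocalRing B] (M : Type)
    [AddCommGroup M] [Module B M]
    (ι : ℕ → Type) [∀ i, Fintype (ι i)] [∀ i, DecidableEq (ι i)]
    (d : ∀ i, Matrix (ι i) (ι (i + 1)) B) (hdd : ∀ i, d i * d (i + 1) = 0)
    (hex : ∀ i v, d i *ᵥ v = 0 → ∃ w, v = d (i + 1) *ᵥ w)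
    (ε : (ι 0 → B) →ₗ[B] ResidueField B) (hε : Function.Surjective ε)
    (hε0 : ∀ v, ε v = 0 ↔ ∃ w, v = d 0 *ᵥ w) (i : ℕ) :
    bettiNumber B M i = nu B (Hsub (Zc ι d M i) (Bc ι d M i)) := by
  obtain ⟨e⟩ := tor_equiv M (ResidueField B) ι d hdd hex ε hε hε0 i
  exact nu_congr e

/-- `Hsub` commutes with products. -/
theorem Hsub.prod {B : Type} [CommRing B] {X Y : Type} [AddCommGroup X] [Module B X]
    [AddCommGroup Y] [Module B Y] (N R : Submodule B X) (N' R' : Submodule B Y) :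
    Nonempty (Hsub (N.prod N') (R.prod R') ≃ₗ[B] (Hsub N R × Hsub N' R')) := by
  let g : (N.prod N') →ₗ[B] (Hsub N R × Hsub N' R') :=
    { toFun := fun x => (Submodule.Quotient.mk ⟨x.1.1, x.2.1⟩, Submodule.Quotient.mk ⟨x.1.2, x.2.2⟩)
      map_add' := fun x y => rfl
      map_smul' := fun x y => rfl }
  have hg : Function.Surjective g := by
    rintro ⟨x, y⟩
    obtain ⟨x, rfl⟩ := Submodule.Quotient.mk_surjective _ x
    obtain ⟨y, rfl⟩ := Submodule.Quotient.mk_surjective _ y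
    exact ⟨⟨(x.1, y.1), x.2, y.2⟩, rfl⟩
  refine ⟨(Submodule.quotEquivOfEq _ _ ?_).trans (LinearMap.quotKerEquivOfSurjective g hg)⟩
  ext ⟨⟨x, y⟩, hx, hy⟩
  rw [LinearMap.mem_ker]
  show (x ∈ R ∧ y ∈ R') ↔ (Submodule.Quotient.mk _, Submodule.Quotient.mk _) = _
  rw [Prod.mk_eq_zero, Submodule.Quotient.mk_eq_zero, Submodule.Quotient.mk_eq_zero]
  rfl

theorem split {B : Type} [CommRing B] (M : Type) [AddCommGroup M] [Module B M] {p q : ℕ → ℕ}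
    (d : ∀ i, Matrix (Fin (p i)) (Fin (p (i + 1))) B)
    (δ : ∀ i, Matrix (Fin (q i)) (Fin (q (i + 1))) B)
    (φ : ∀ i, Matrix (Fin (p (i + 1))) (Fin (q i)) B)
    (hφ : ∀ i a b (m : M), φ i a b • m = 0) (i : ℕ) :
    Nonempty (Hsub (Zc (ι' p q) (D' d δ φ) M i) (Bc (ι' p q) (D' d δ φ) M i) ≃ₗ[B]
      (Hsub (Zc (fun i => Fin (p i)) d M i) (Bc (fun i => Fin (p i)) d M i) ×
       Hsub (Zc (fun i => Fin (q' q i)) (δ' δ) M i) (Bc (fun i => Fin (q' q i)) (δ' δ) M i))) := by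
  obtain ⟨e⟩ := Hsub.prod (Zc (fun i => Fin (p i)) d M i) (Bc (fun i => Fin (p i)) d M i)
    (Zc (fun i => Fin (q' q i)) (δ' δ) M i) (Bc (fun i => Fin (q' q i)) (δ' δ) M i)
  have hφ' : ∀ i a b (m : M), φ' φ i a b • m = 0 := by
    intro i a b m
    rcases i with _ | i
    · exact zero_smul _ _
    · exact hφ i a b m
  have key : ∀ i v, LinearEquiv.sumArrowLequivProdArrow (Fin (p i)) (Fin (q' q i)) B M
      (act M (D' d δ φ i) v) = (act M (d i) (v ∘ Sum.inl), act M (δ' δ i) (v ∘ Sum.inr)) := by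
    intro i v
    apply Prod.ext
    · ext a
      simp [act_apply, D', hφ']
    · ext a
      simp [act_apply, D']
  refine ⟨(Hsub.equiv _ _ _ _
    (LinearEquiv.sumArrowLequivProdArrow (Fin (p i)) (Fin (q' q i)) B M) ?_ ?_).trans e⟩
  · intro x
    rcases i with _ | i
    · exact ⟨fun _ => ⟨trivial, trivial⟩, fun _ => trivial⟩
    · show act M (D' d δ φ i) x = 0 ↔ (act M (d i) (x ∘ Sum.inl) = 0 ∧ act M (δ' δ i) (x ∘ Sum.inr) = 0)
      rw [← Prod.mk_eq_zero, ← key, LinearEquiv.map_eq_zero_iff]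
  · intro x
    constructor
    · rintro ⟨y, rfl⟩
      rw [key]
      exact ⟨⟨_, rfl⟩, ⟨_, rfl⟩⟩
    · rintro ⟨⟨y, hy⟩, ⟨z, hz⟩⟩
      refine ⟨Sum.elim y z, ?_⟩
      apply (LinearEquiv.sumArrowLequivProdArrow (Fin (p i)) (Fin (q' q i)) B M).injective
      rw [key]
      exact Prod.ext hy hz

theorem shift {B : Type} [CommRing B] (M : Type) [AddCommGroup M] [Module B M] {q : ℕ → ℕ}
    (δ : ∀ i, Matrix (Fin (q i)) (Fin (q (i + 1))) B) (i : ℕ) :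
    Nonempty (Hsub (Zc (fun i => Fin (q' q i)) (δ' δ) M (i + 2))
        (Bc (fun i => Fin (q' q i)) (δ' δ) M (i + 2)) ≃ₗ[B]
      Hsub (Zc (fun i => Fin (q i)) δ M i) (Bc (fun i => Fin (q i)) δ M i)) := by
  have key : ∀ i (x : Fin (q (i + 1)) → M), act M (- δ i) x = - act M (δ i) x := by
    intro i x
    ext a
    simp [act_apply]
  have key1 : ∀ i (x : Fin (q (i + 1)) → M), act M (- δ i) x = 0 ↔ act M (δ i) x = 0 := by
    intro i x
    rw [key, neg_eq_zero]
  have key2 : ∀ i (x : Fin (q (i + 1)) → M), act M (δ i) (- x) = act M (- δ i) x := by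
    intro i x
    rw [key, map_neg]
  have key3 : ∀ i (x : Fin (q (i + 1)) → M), act M (- δ i) (- x) = act M (δ i) x := by
    intro i x
    rw [key, map_neg, neg_neg]
  refine ⟨Hsub.equiv _ _ _ _ (LinearEquiv.refl B (Fin (q i) → M)) ?_ ?_⟩
  · intro x
    rcases i with _ | i
    · refine ⟨fun _ => trivial, fun _ => ?_⟩
      show act M (δ' δ 1) x = 0
      ext a
      exact a.elim0
    · exact key1 i x
  · intro x
    constructor
    · rintro ⟨y, hy⟩
      exact ⟨-y, (key2 i y).trans hy⟩
    · rintro ⟨y, hy⟩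
      exact ⟨-y, (key3 i y).trans hy⟩

theorem restr {A B : Type} [CommRing A] [CommRing B] [Algebra A B] (M : Type) [AddCommGroup M]
    [Module A M] [Module B M] [IsScalarTower A B M] {p : ℕ → ℕ}
    (d : ∀ i, Matrix (Fin (p i)) (Fin (p (i + 1))) A) (i : ℕ) :
    Nonempty (Hsub (Zc (fun i => Fin (p i)) d M i) (Bc (fun i => Fin (p i)) d M i) ≃ₗ[A]
      Hsub (Zc (fun i => Fin (p i)) (fun i => (d i).map (algebraMap A B)) M i)
        (Bc (fun i => Fin (p i)) (fun i => (d i).map (algebraMap A B)) M i)) := by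
  have key : ∀ i (x : Fin (p (i + 1)) → M),
      act M ((d i).map (algebraMap A B)) x = act M (d i) x := by
    intro i x
    ext a
    simp [act_apply]
  have hZ : ∀ x, x ∈ Zc (fun i => Fin (p i)) d M i ↔
      x ∈ Zc (fun i => Fin (p i)) (fun i => (d i).map (algebraMap A B)) M i := by
    intro x
    rcases i with _ | i
    · exact ⟨fun _ => trivial, fun _ => trivial⟩
    · exact Eq.congr_left (key i x).symm
  have hB : ∀ x, x ∈ Bc (fun i => Fin (p i)) d M i ↔
      x ∈ Bc (fun i => Fin (p i)) (fun i => (d i).map (algebraMap A B)) M i := by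
    intro x
    exact exists_congr fun y => Eq.congr_left (key i y).symm
  let g : Zc (fun i => Fin (p i)) d M i →ₗ[A]
      Hsub (Zc (fun i => Fin (p i)) (fun i => (d i).map (algebraMap A B)) M i)
        (Bc (fun i => Fin (p i)) (fun i => (d i).map (algebraMap A B)) M i) :=
    { toFun := fun x => Submodule.Quotient.mk ⟨x.1, (hZ _).1 x.2⟩
      map_add' := fun x y => rfl
      map_smul' := fun a y => rfl }
  have hg : Function.Surjective g := by
    intro x
    obtain ⟨x, rfl⟩ := Submodule.Quotient.mk_surjective _ x
    exact ⟨⟨x.1, (hZ _).2 x.2⟩, rfl⟩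
  refine ⟨(Submodule.quotEquivOfEq _ _ ?_).trans (LinearMap.quotKerEquivOfSurjective g hg)⟩
  ext ⟨x, hx⟩
  rw [LinearMap.mem_ker]
  show (x ∈ Bc (fun i => Fin (p i)) d M i) ↔ Submodule.Quotient.mk _ = _
  rw [Submodule.Quotient.mk_eq_zero, hB]
  rfl

end Shamash

namespace Shamash

open Matrix IsLocalRing

theorem exists_sum_of_mem_mul {A : Type} [CommRing A] (I J : Ideal A) (f : A) (h : f ∈ I * J) :
    ∃ (r : ℕ) (a b : Fin r → A), (∀ j, a j ∈ I) ∧ (∀ j, b j ∈ J) ∧ f = ∑ j, a j * b j := by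
  induction h using Submodule.mul_induction_on' with
  | mem_mul_mem m hm n hn =>
    exact ⟨1, fun _ => m, fun _ => n, fun _ => hm, fun _ => hn, by simp⟩
  | add x _ y _ hx hy =>
    obtain ⟨r, a, b, ha, hb, rfl⟩ := hx
    obtain ⟨r', a', b', ha', hb', rfl⟩ := hy
    refine ⟨r + r', Fin.append a a', Fin.append b b', ?_, ?_, ?_⟩
    · intro j
      refine Fin.addCases (fun j => ?_) (fun j => ?_) j
      · simpa using ha j
      · simpa using ha' j
    · intro j
      refine Fin.addCases (fun j => ?_) (fun j => ?_) j
      · simpa using hb j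
      · simpa using hb' j
    · simp [Fin.sum_univ_add]

theorem exists_kres (A : Type) [CommRing A] [IsNoetherianRing A] [IsLocalRing A] :
    ∃ (p : ℕ → ℕ) (d : ∀ i, Matrix (Fin (p i)) (Fin (p (i + 1))) A) (i0 : Fin (p 0)),
      (∀ i, d i * d (i + 1) = 0) ∧ (∀ i v, d i *ᵥ v = 0 → ∃ w, v = d (i + 1) *ᵥ w) ∧
      (∀ j, j = i0) ∧ ∀ v : Fin (p 0) → A, v i0 ∈ maximalIdeal A ↔ ∃ w, v = d 0 *ᵥ w := by
  obtain ⟨r, g, hg⟩ := Submodule.fg_iff_exists_fin_generating_family.1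
    (IsNoetherian.noetherian (maximalIdeal A))
  obtain ⟨p, d, h1, h2, h0, h1', h3⟩ := exists_res (0 : A) (Matrix.of fun (_ : Fin 1) j => g j)
  refine ⟨p, d, Fin.cast h0.symm 0, ?_, ?_, ?_, ?_⟩
  · intro i
    obtain ⟨Z, hZ⟩ := h1 i
    rw [hZ, zero_smul]
  · intro i v hv
    exact h2 i v 0 (by rw [hv, zero_smul])
  · intro j
    have := j.2
    apply Fin.ext
    simp
    omega
  · intro v
    have hall : ∀ j : Fin (p 0), j = Fin.cast h0.symm 0 := by
      intro j
      have := j.2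
      apply Fin.ext
      simp
      omega
    rw [← hg, Submodule.mem_span_range_iff_exists_fun]
    constructor
    · rintro ⟨c, hc⟩
      refine ⟨fun j => c (Fin.cast h1' j), ?_⟩
      ext j
      rw [hall j, ← hc, h3]
      simp only [Matrix.mulVec, dotProduct, Matrix.submatrix_apply, Matrix.of_apply, smul_eq_mul]
      rw [← Equiv.sum_comp (finCongr h1')]
      simp [mul_comm]
    · rintro ⟨w, rfl⟩
      refine ⟨fun j => w (Fin.cast h1'.symm j), ?_⟩
      rw [h3]
      simp only [Matrix.mulVec, dotProduct, Matrix.submatrix_apply, Matrix.of_apply, smul_eq_mul]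
      rw [← Equiv.sum_comp (finCongr h1')]
      simp [mul_comm]

/-- Evaluation at a coordinate followed by the residue map. -/
noncomputable def evalRes (B : Type) [CommRing B] [IsLocalRing B] {ι : Type} (i0 : ι) :
    (ι → B) →ₗ[B] ResidueField B :=
  (Algebra.linearMap B (ResidueField B)).comp (LinearMap.proj i0)

theorem evalRes_eq_zero (B : Type) [CommRing B] [IsLocalRing B] {ι : Type} (i0 : ι) (v : ι → B) :
    evalRes B i0 v = 0 ↔ v i0 ∈ maximalIdeal B := by
  exact residue_eq_zero_iff _

theorem evalRes_surj (B : Type) [CommRing B] [IsLocalRing B] {ι : Type} (i0 : ι) :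
    Function.Surjective (evalRes B i0) := by
  intro y
  obtain ⟨b, rfl⟩ := residue_surjective y
  exact ⟨fun _ => b, rfl⟩

theorem step (A B : Type) [CommRing A] [IsNoetherianRing A] [IsLocalRing A] [CommRing B]
    [IsLocalRing B] [Algebra A B] (hs : Function.Surjective (algebraMap A B)) (f : A)
    (hker : ∀ x, algebraMap A B x = 0 ↔ ∃ y, x = f * y) (hf : ∀ x, f * x = 0 → x = 0)
    (M : Type) [AddCommGroup M] [Module A M] [Module B M] [IsScalarTower A B M]
    [Module.Finite B M] (hfm : f ∈ maximalIdeal A * Module.annihilator A M) :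
    bettiNumber B M 0 = bettiNumber A M 0 ∧ bettiNumber B M 1 = bettiNumber A M 1 ∧
      ∀ i, bettiNumber B M (i + 2) = bettiNumber A M (i + 2) + bettiNumber B M i := by
  have : IsNoetherianRing B := isNoetherianRing_of_surjective A B (algebraMap A B) hs
  obtain ⟨p, d, i0, hdd, hex, hi0, hm⟩ := exists_kres A
  have hfmax : f ∈ maximalIdeal A :=
    (show maximalIdeal A * Module.annihilator A M ≤ maximalIdeal A from Ideal.mul_le_left) hfm
  obtain ⟨r, a, b, ha, hb, hab⟩ := exists_sum_of_mem_mul (maximalIdeal A) (Module.annihilator A M) f hfm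
  have hG : Nonempty (GD A (Module.annihilator A M) f p d) := by
    have hsum : f = 0 + ∑ j, a j * b j := by rw [hab, zero_add]
    rw [hsum]
    refine GD.exists_of_sum r (A := A) ⊥ p d hdd hex ?_ 0 (Ideal.zero_mem _) 0
      (fun _ _ => Ideal.zero_mem _) (by rw [Matrix.mul_zero, zero_smul]) a b ?_ ?_ _ bot_le hb
    · intro i v hv _
      refine ⟨0, ?_, fun _ => Ideal.zero_mem _⟩
      rw [Matrix.mulVec_zero]
      funext x
      exact hv x
    · intro j
      obtain ⟨w, hw⟩ := (hm (fun _ => a j)).1 (ha j)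
      refine ⟨Matrix.of fun x _ => w x, ?_⟩
      ext x y
      have := congrFun hw x
      rw [hi0 x, hi0 y]
      rw [hi0 x] at this
      simpa [Matrix.mul_apply, Matrix.mulVec, dotProduct] using this.symm
    · intro x hx
      exact hf x (by rw [hsum]; exact hx)
  obtain ⟨G⟩ := hG
  obtain ⟨db, hdb⟩ : ∃ x : ∀ i, Matrix (Fin (p i)) (Fin (p (i + 1))) B,
    x = fun i => (d i).map (algebraMap A B) := ⟨_, rfl⟩
  obtain ⟨δb, hδb⟩ : ∃ x : ∀ i, Matrix (Fin (G.q i)) (Fin (G.q (i + 1))) B,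
    x = fun i => (G.δ i).map (algebraMap A B) := ⟨_, rfl⟩
  obtain ⟨φb, hφb⟩ : ∃ x : ∀ i, Matrix (Fin (p (i + 1))) (Fin (G.q i)) B,
    x = fun i => (G.φ i).map (algebraMap A B) := ⟨_, rfl⟩
  have hBD : BD B p db G.q δb φb := by
    rw [hdb, hδb, hφb]
    exact G.toBD (algebraMap A B) hs f hker hf hdd hex
  -- augmentation
  have hmB : ∀ v : Fin (p 0) → B, v i0 ∈ maximalIdeal B ↔ ∃ w, v = db 0 *ᵥ w := by
    intro v
    rw [hdb]
    obtain ⟨v, rfl⟩ := exists_lift (algebraMap A B) hs v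
    show algebraMap A B (v i0) ∈ _ ↔ _
    rw [mem_max_iff _ hs]
    constructor
    · intro h
      obtain ⟨w, rfl⟩ := (hm v).1 h
      exact ⟨algebraMap A B ∘ w, (map_mulVec' _ _ _).symm⟩
    · rintro ⟨w, hw⟩
      obtain ⟨w, rfl⟩ := exists_lift (algebraMap A B) hs w
      have h0 := congrFun (hw.trans (map_mulVec' _ _ _)) i0
      simp only [Function.comp] at h0
      have h1 : algebraMap A B (v i0 - (d 0 *ᵥ w) i0) = 0 := by rw [map_sub, h0, sub_self]
      obtain ⟨y, hy⟩ := (hker _).1 h1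
      have h2 : (d 0 *ᵥ w) i0 ∈ maximalIdeal A := (hm _).2 ⟨w, rfl⟩
      have : v i0 = f * y + (d 0 *ᵥ w) i0 := by rw [← hy]; ring
      rw [this]
      exact Ideal.add_mem _ (Ideal.mul_mem_right _ _ hfmax) h2
  -- Betti numbers over A
  have bA : ∀ i, bettiNumber A M i =
      nu B (Hsub (Zc (fun i => Fin (p i)) db M i) (Bc (fun i => Fin (p i)) db M i)) := by
    intro i
    rw [betti_eq M (fun i => Fin (p i)) d hdd hex (evalRes A i0) (evalRes_surj A i0)
      (fun v => (evalRes_eq_zero A i0 v).trans (hm v)) i]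
    obtain ⟨e⟩ := restr (B := B) M d i
    rw [nu_congr e, hdb]
    exact nu_change A B hs _
  have bB : ∀ i, bettiNumber B M i =
      nu B (Hsub (Zc (ι' p G.q) (D' db δb φb) M i) (Bc (ι' p G.q) (D' db δb φb) M i)) := by
    intro i
    refine betti_eq M (ι' p G.q) (D' db δb φb) hBD.dd hBD.ex (evalRes B (Sum.inl i0))
      (evalRes_surj B _) (fun v => (evalRes_eq_zero B _ v).trans ?_) i
    refine (hmB (v ∘ Sum.inl)).trans ?_
    constructor
    · rintro ⟨w, hw⟩
      refine ⟨Sum.elim w 0, ?_⟩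
      unfold D'
      rw [Matrix.fromBlocks_mulVec]
      ext (j | j)
      · simpa using congrFun hw j
      · exact j.elim0
    · rintro ⟨w, rfl⟩
      refine ⟨w ∘ Sum.inl, ?_⟩
      unfold D'
      rw [Matrix.fromBlocks_mulVec]
      have e : φ' φb 0 *ᵥ (w ∘ Sum.inr) = 0 := Matrix.zero_mulVec _
      rw [e, add_zero]
      rfl
  have bD : ∀ i, bettiNumber B M i =
      nu B (Hsub (Zc (fun i => Fin (G.q i)) δb M i) (Bc (fun i => Fin (G.q i)) δb M i)) := by
    intro i
    obtain ⟨θb, hθb⟩ : ∃ x : Matrix (Fin (p 0)) (Fin (G.q 0)) B,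
      x = G.θ.map (algebraMap A B) := ⟨_, rfl⟩
    obtain ⟨θb', hθb'⟩ : ∃ x : Matrix (Fin (G.q 0)) (Fin (p 0)) B,
      x = G.θ'.map (algebraMap A B) := ⟨_, rfl⟩
    have e1 : θb * θb' = 1 := by
      rw [hθb, hθb', ← Matrix.map_mul, G.hθ]
      simp
    have e2 : θb' * θb = 1 := by
      rw [hθb, hθb', ← Matrix.map_mul, G.hθ']
      simp
    obtain ⟨Y, hY⟩ := G.hY
    obtain ⟨Y', Z, hY'⟩ := G.hY'
    have e3 : θb * δb 0 = db 0 * Y.map (algebraMap A B) := by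
      rw [hθb, hδb, hdb]
      simp only
      rw [← Matrix.map_mul, hY, Matrix.map_mul]
    have e4 : db 0 = θb * δb 0 * Y'.map (algebraMap A B) := by
      have hπf : algebraMap A B f = 0 := (hker f).2 ⟨1, by simp⟩
      rw [hθb, hδb, hdb]
      simp only
      rw [← Matrix.map_mul, ← Matrix.map_mul, hY']
      ext s t
      simp [hπf]
    refine betti_eq M (fun i => Fin (G.q i)) δb hBD.hδδ hBD.hd
      ((evalRes B i0).comp θb.mulVecLin) ?_ ?_ i
    · intro y
      obtain ⟨v, rfl⟩ := evalRes_surj B i0 y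
      refine ⟨θb' *ᵥ v, ?_⟩
      simp [Matrix.mulVec_mulVec, e1]
    · intro v
      refine (evalRes_eq_zero B _ _).trans ((hmB _).trans ?_)
      rw [Matrix.mulVecLin_apply]
      constructor
      · rintro ⟨w, hw⟩
        refine ⟨Y'.map (algebraMap A B) *ᵥ w, ?_⟩
        have : v = θb' *ᵥ (θb *ᵥ v) := by rw [Matrix.mulVec_mulVec, e2, Matrix.one_mulVec]
        rw [this, hw, e4, Matrix.mulVec_mulVec, Matrix.mul_assoc, ← Matrix.mul_assoc θb', e2,
          Matrix.one_mul, Matrix.mulVec_mulVec]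
      · rintro ⟨w, rfl⟩
        refine ⟨Y.map (algebraMap A B) *ᵥ w, ?_⟩
        rw [Matrix.mulVec_mulVec, Matrix.mulVec_mulVec, e3]
  have hφM : ∀ i a b (m : M), φb i a b • m = 0 := by
    intro i a b m
    rw [hφb]
    show algebraMap A B (G.φ i a b) • m = 0
    rw [algebraMap_smul]
    exact Module.mem_annihilator.1 (G.hJ i a b) m
  have main : ∀ i, bettiNumber B M i = bettiNumber A M i +
      nu B (Hsub (Zc (fun i => Fin (q' G.q i)) (δ' δb) M i)
        (Bc (fun i => Fin (q' G.q i)) (δ' δb) M i)) := by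
    intro i
    obtain ⟨e⟩ := split M db δb φb hφM i
    rw [bB, nu_congr e, nu_prod, bA]
  refine ⟨?_, ?_, ?_⟩
  · rw [main]
    have : Subsingleton (Fin (q' G.q 0) → M) := inferInstanceAs (Subsingleton (Fin 0 → M))
    rw [nu_subsingleton, add_zero]
  · rw [main]
    have : Subsingleton (Fin (q' G.q 1) → M) := inferInstanceAs (Subsingleton (Fin 0 → M))
    rw [nu_subsingleton, add_zero]
  · intro i
    rw [main, bD i]
    obtain ⟨e⟩ := shift M δb i
    rw [nu_congr e]

end Shamash

namespace Shamash

open Matrix IsLocalRing Pointwise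

theorem betti_bij (A B : Type) [CommRing A] [IsNoetherianRing A] [IsLocalRing A] [CommRing B]
    [IsLocalRing B] [Algebra A B] (hs : Function.Surjective (algebraMap A B))
    (hker : ∀ x, algebraMap A B x = 0 → x = 0)
    (M : Type) [AddCommGroup M] [Module A M] [Module B M] [IsScalarTower A B M] (i : ℕ) :
    bettiNumber A M i = bettiNumber B M i := by
  obtain ⟨p, d, i0, hdd, hex, hi0, hm⟩ := exists_kres A
  have hinj : Function.Injective (algebraMap A B) := (injective_iff_map_eq_zero _).2 hker
  obtain ⟨db, hdb⟩ : ∃ x : ∀ i, Matrix (Fin (p i)) (Fin (p (i + 1))) B,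
    x = fun i => (d i).map (algebraMap A B) := ⟨_, rfl⟩
  have hmul : ∀ i (w : Fin (p (i + 1)) → A),
      db i *ᵥ (algebraMap A B ∘ w) = algebraMap A B ∘ (d i *ᵥ w) := by
    intro i w
    rw [hdb]
    exact map_mulVec' _ _ _
  have hddB : ∀ i, db i * db (i + 1) = 0 := by
    intro i
    rw [hdb]
    simp only
    rw [← Matrix.map_mul, hdd]
    ext s t
    simp
  have hex' : ∀ i v, db i *ᵥ v = 0 → ∃ w, v = db (i + 1) *ᵥ w := by
    intro i v hv
    obtain ⟨v, rfl⟩ := exists_lift (algebraMap A B) hs v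
    rw [hmul] at hv
    obtain ⟨w, rfl⟩ := hex i v (by
      ext j
      exact hker _ (congrFun hv j))
    exact ⟨_, (hmul _ w).symm⟩
  have hmB : ∀ v : Fin (p 0) → B, v i0 ∈ maximalIdeal B ↔ ∃ w, v = db 0 *ᵥ w := by
    intro v
    obtain ⟨v, rfl⟩ := exists_lift (algebraMap A B) hs v
    show algebraMap A B (v i0) ∈ _ ↔ _
    rw [mem_max_iff _ hs]
    constructor
    · intro h
      obtain ⟨w, rfl⟩ := (hm v).1 h
      exact ⟨algebraMap A B ∘ w, (hmul _ _).symm⟩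
    · rintro ⟨w, hw⟩
      obtain ⟨w, rfl⟩ := exists_lift (algebraMap A B) hs w
      rw [hmul] at hw
      exact (hm v).2 ⟨w, by
        ext j
        exact hinj (congrFun hw j)⟩
  rw [betti_eq M (fun i => Fin (p i)) d hdd hex (evalRes A i0) (evalRes_surj A i0)
      (fun v => (evalRes_eq_zero A i0 v).trans (hm v)) i,
    betti_eq M (fun i => Fin (p i)) db hddB hex' (evalRes B i0) (evalRes_surj B i0)
      (fun v => (evalRes_eq_zero B i0 v).trans (hmB v)) i]
  obtain ⟨e⟩ := restr (B := B) M d i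
  rw [nu_congr e, hdb]
  exact nu_change A B hs _

theorem betti_subsingleton (A : Type) [CommRing A] [IsNoetherianRing A] [IsLocalRing A]
    (M : Type) [AddCommGroup M] [Module A M] [Subsingleton M] (i : ℕ) :
    bettiNumber A M i = 0 := by
  obtain ⟨p, d, i0, hdd, hex, hi0, hm⟩ := exists_kres A
  rw [betti_eq M (fun i => Fin (p i)) d hdd hex (evalRes A i0) (evalRes_surj A i0)
      (fun v => (evalRes_eq_zero A i0 v).trans (hm v)) i]
  exact nu_subsingleton

theorem betti_congr {A : Type} [CommRing A] [IsLocalRing A]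
    {M M' : Type} [AddCommGroup M] [Module A M] [AddCommGroup M'] [Module A M']
    (e : M ≃ₗ[A] M') (i : ℕ) :
    bettiNumber A M i = bettiNumber A M' i :=
  nu_congr (((Tor (ModuleCat A) i).mapIso e.toModuleIso).app
    (ModuleCat.of A (ResidueField A))).toLinearEquiv

theorem res_equiv (A B : Type) [CommRing A] [IsLocalRing A] [CommRing B] [IsLocalRing B]
    [Algebra A B] (hs : Function.Surjective (algebraMap A B)) :
    Nonempty (ResidueField A ≃ₗ[A] ResidueField B) := by
  have := IsLocalHom.of_surjective (algebraMap A B) hs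
  let σ : ResidueField A →+* ResidueField B := ResidueField.map (algebraMap A B)
  have hσ : Function.Bijective σ := by
    refine ⟨σ.injective, fun y => ?_⟩
    obtain ⟨b, rfl⟩ := residue_surjective y
    obtain ⟨a, rfl⟩ := hs b
    exact ⟨residue A a, ResidueField.map_residue _ _⟩
  exact ⟨LinearEquiv.ofBijective
      { toFun := σ
        map_add' := map_add σ
        map_smul' := by
          intro a x
          obtain ⟨x, rfl⟩ := residue_surjective x
          rw [Algebra.smul_def, Algebra.smul_def, map_mul]
          rfl } hσ⟩

/-- Poincare series. -/
noncomputable def PS (A : Type) [CommRing A] [IsLocalRing A] (M : Type) [AddCommGroup M]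
    [Module A M] : PowerSeries ℤ := PowerSeries.mk fun i => (bettiNumber A M i : ℤ)

theorem PS_step (A B : Type) [CommRing A] [IsNoetherianRing A] [IsLocalRing A] [CommRing B]
    [IsLocalRing B] [Algebra A B] (hs : Function.Surjective (algebraMap A B)) (f : A)
    (hker : ∀ x, algebraMap A B x = 0 ↔ ∃ y, x = f * y) (hf : ∀ x, f * x = 0 → x = 0)
    (M : Type) [AddCommGroup M] [Module A M] [Module B M] [IsScalarTower A B M]
    [Module.Finite B M] (hfm : f ∈ maximalIdeal A * Module.annihilator A M) :
    PS A M = (1 - PowerSeries.X ^ 2) * PS B M := by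
  obtain ⟨h0, h1, h2⟩ := step A B hs f hker hf M hfm
  ext i
  rw [sub_mul, one_mul, map_sub, PowerSeries.coeff_X_pow_mul']
  unfold PS
  simp only [PowerSeries.coeff_mk]
  rcases i with _ | _ | i
  · simp [h0]
  · simp [h1]
  · simp [h2]

theorem chain (B : Type) [CommRing B] [IsLocalRing B] (M : Type) [AddCommGroup M] [Module B M]
    [Module.Finite B M] (n : ℕ) : ∀ (A : Type) [CommRing A] [IsNoetherianRing A] [IsLocalRing A]
    [Algebra A B] [Module A M] [IsScalarTower A B M] (rs : List A), rs.length = n →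
    Function.Surjective (algebraMap A B) →
    (∀ x, algebraMap A B x = 0 ↔ x ∈ Ideal.ofList rs) →
    RingTheory.Sequence.IsWeaklyRegular A rs →
    Ideal.ofList rs ≤ maximalIdeal A * Module.annihilator A M →
    PS A M = (1 - PowerSeries.X ^ 2) ^ n * PS B M := by
  induction n with
  | zero =>
    intro A _ _ _ _ _ _ rs hn hs hker hreg hann
    obtain rfl := List.length_eq_zero_iff.1 hn
    rw [pow_zero, one_mul]
    ext i
    unfold PS
    simp only [PowerSeries.coeff_mk]
    rw [betti_bij A B hs (fun x hx => by simpa using (hker x).1 hx) M i]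
  | succ n ih =>
    intro A _ _ _ _ _ _ rs hn hs hker hreg hann
    obtain ⟨f, rs, rfl⟩ : ∃ f rs', rs = f :: rs' := by
      cases rs with
      | nil => simp at hn
      | cons f rs => exact ⟨f, rs, rfl⟩
    have hn' : rs.length = n := by simpa using hn
    rw [RingTheory.Sequence.isWeaklyRegular_cons_iff'] at hreg
    obtain ⟨hf, hreg⟩ := hreg
    rw [Ideal.ofList_cons] at hker hann
    have hfann : f ∈ maximalIdeal A * Module.annihilator A M :=
      hann (Ideal.mem_sup_left (Ideal.mem_span_singleton_self f))
    have hfmax : f ∈ maximalIdeal A :=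
      (show maximalIdeal A * Module.annihilator A M ≤ maximalIdeal A from Ideal.mul_le_left) hfann
    have hle : Ideal.span {f} ≤ maximalIdeal A := (Ideal.span_singleton_le_iff_mem _).2 hfmax
    have hne : Ideal.span {f} ≠ ⊤ := fun h => (maximalIdeal.isMaximal A).ne_top (top_le_iff.1 (h ▸ hle))
    have : Nontrivial (A ⧸ Ideal.span {f}) := Ideal.Quotient.nontrivial_iff.2 hne
    have hsC : Function.Surjective (algebraMap A (A ⧸ Ideal.span {f})) := Ideal.Quotient.mk_surjective
    have : IsLocalRing (A ⧸ Ideal.span {f}) :=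
      IsLocalRing.of_surjective' (algebraMap A (A ⧸ Ideal.span {f})) hsC
    have hlift : ∀ a ∈ Ideal.span {f}, algebraMap A B a = 0 := fun a ha =>
      (hker a).2 (Ideal.mem_sup_left ha)
    let : Algebra (A ⧸ Ideal.span {f}) B :=
      (Ideal.Quotient.lift (Ideal.span {f}) (algebraMap A B) hlift).toAlgebra
    have hAC : ∀ a, algebraMap (A ⧸ Ideal.span {f}) B (algebraMap A (A ⧸ Ideal.span {f}) a) =
        algebraMap A B a := fun a => rfl
    let : Module (A ⧸ Ideal.span {f}) M := Module.compHom M (algebraMap (A ⧸ Ideal.span {f}) B)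
    have : IsScalarTower (A ⧸ Ideal.span {f}) B M :=
      IsScalarTower.of_algebraMap_smul fun c x => rfl
    have : IsScalarTower A (A ⧸ Ideal.span {f}) M :=
      IsScalarTower.of_algebraMap_smul fun a x => by
        rw [← algebraMap_smul B (algebraMap A (A ⧸ Ideal.span {f}) a) x, hAC, algebraMap_smul]
    have hsCB : Function.Surjective (algebraMap (A ⧸ Ideal.span {f}) B) := by
      intro b
      obtain ⟨a, rfl⟩ := hs b
      exact ⟨_, hAC a⟩
    have : Module.Finite (A ⧸ Ideal.span {f}) B :=
      Module.Finite.of_surjective (Algebra.linearMap (A ⧸ Ideal.span {f}) B) hsCB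
    have : Module.Finite (A ⧸ Ideal.span {f}) M := Module.Finite.trans B M
    have h1 : PS A M = (1 - PowerSeries.X ^ 2) * PS (A ⧸ Ideal.span {f}) M := by
      refine PS_step A _ hsC f ?_ ?_ M hfann
      · intro x
        refine Ideal.Quotient.eq_zero_iff_mem.trans ?_
        rw [Ideal.mem_span_singleton]
        rfl
      · intro x hx
        exact hf (by simpa using hx)
    have h2 := ih (A ⧸ Ideal.span {f}) (rs.map (Ideal.Quotient.mk (Ideal.span {f})))
      (by simpa using hn') hsCB ?_ ?_ ?_
    · rw [h1, h2, pow_succ']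
      ring
    · intro x
      obtain ⟨x, rfl⟩ := Ideal.Quotient.mk_surjective x
      rw [← Ideal.map_ofList, Ideal.mem_quotient_iff_mem_sup, sup_comm]
      exact hker x
    · have heq : f • (⊤ : Submodule A A) = Ideal.span {f} := by
        ext x
        rw [Submodule.mem_smul_pointwise_iff_exists, Ideal.mem_span_singleton]
        constructor
        · rintro ⟨y, _, rfl⟩
          exact ⟨y, rfl⟩
        · rintro ⟨y, rfl⟩
          exact ⟨y, trivial, rfl⟩
      let e : QuotSMulTop f A ≃ₗ[A] (A ⧸ Ideal.span {f}) := Submodule.quotEquivOfEq _ _ heq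
      refine (AddEquiv.isWeaklyRegular_congr (e := e.toAddEquiv) ?_).1 hreg
      rw [List.forall₂_same]
      intro r _ x
      obtain ⟨r, rfl⟩ := Ideal.Quotient.mk_surjective r
      exact e.map_smul r x
    · rw [← Ideal.map_ofList]
      refine (Ideal.map_mono (le_sup_right.trans hann)).trans ?_
      rw [Ideal.map_mul]
      refine Ideal.mul_mono ?_ ?_
      · rw [Ideal.map_le_iff_le_comap]
        intro x hx
        exact (mem_max_iff _ hsC x).2 hx
      · rw [Ideal.map_le_iff_le_comap]
        intro x hx
        rw [Ideal.mem_comap, Module.mem_annihilator]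
        intro m
        have := Module.mem_annihilator.1 hx m
        rw [← this]
        exact algebraMap_smul (A ⧸ Ideal.span {f}) x m

end Shamash
/-- **Inertness for complete intersections (Shamash).** If `f₁, …, fₙ` is a
`Q`-regular sequence contained in the maximal ideal `m` of a Noetherian local
ring `Q`, `I = (f₁, …, fₙ)`, `R = Q/I`, and `M` is a finitely generated
`R`-module with `I ⊆ m·ann_Q(M)`, then `M` is inert by `Q → R`:
`∑_{p+q=i} β_p^R(M)·β_q^Q(k) = ∑_{p+q=i} β_p^Q(M)·β_q^R(k)` for all `i ≥ 0`. -/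
theorem inert_of_regular_sequence_of_ann
    (Q : Type) [CommRing Q] [IsNoetherianRing Q] [IsLocalRing Q]
    (n : ℕ) (f : Fin n → Q)
    (hreg : RingTheory.Sequence.IsRegular Q (List.ofFn f))
    (hfm : ∀ j, f j ∈ IsLocalRing.maximalIdeal Q)
    (I : Ideal Q) (hI : I = Ideal.span (Set.range f))
    [IsLocalRing (Q ⧸ I)]
    (M : Type) [AddCommGroup M] [Module Q M] [Module (Q ⧸ I) M]
    [IsScalarTower Q (Q ⧸ I) M] [Module.Finite (Q ⧸ I) M]
    (hann : I ≤ IsLocalRing.maximalIdeal Q * Module.annihilator Q M)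
    (i : ℕ) :
    ∑ p ∈ Finset.range (i + 1),
        bettiNumber (Q ⧸ I) M p * bettiNumber Q (IsLocalRing.ResidueField Q) (i - p) =
      ∑ p ∈ Finset.range (i + 1),
        bettiNumber Q M p *
          bettiNumber (Q ⧸ I) (IsLocalRing.ResidueField (Q ⧸ I)) (i - p) := by
  have hs : Function.Surjective (algebraMap Q (Q ⧸ I)) := Ideal.Quotient.mk_surjective
  have hof : Ideal.ofList (List.ofFn f) = I := by
    rw [hI, Ideal.ofList]
    congr 1
    ext x
    simp [List.mem_ofFn]
  have hker : ∀ x, algebraMap Q (Q ⧸ I) x = 0 ↔ x ∈ Ideal.ofList (List.ofFn f) := by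
    intro x
    rw [hof]
    exact Ideal.Quotient.eq_zero_iff_mem
  rcases subsingleton_or_nontrivial M with hM | hM
  · simp [Shamash.betti_subsingleton]
  have hle : Module.annihilator Q M ≤ IsLocalRing.maximalIdeal Q := by
    refine IsLocalRing.le_maximalIdeal fun h => ?_
    have h1 : (1 : Q) ∈ Module.annihilator Q M := h ▸ Submodule.mem_top
    obtain ⟨m, hm⟩ := exists_ne (0 : M)
    exact hm (by simpa using Module.mem_annihilator.1 h1 m)
  obtain ⟨e⟩ := Shamash.res_equiv Q (Q ⧸ I) hs
  have hle' : IsLocalRing.maximalIdeal Q ≤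
      Module.annihilator Q (IsLocalRing.ResidueField (Q ⧸ I)) := by
    intro x hx
    rw [← e.annihilator_eq, Module.mem_annihilator]
    intro y
    rw [Algebra.smul_def]
    have : algebraMap Q (IsLocalRing.ResidueField Q) x = 0 :=
      (IsLocalRing.residue_eq_zero_iff x).2 hx
    rw [this, zero_mul]
  have hM1 := Shamash.chain (Q ⧸ I) M _ Q (List.ofFn f) rfl hs hker hreg.toIsWeaklyRegular
    (hof.le.trans hann)
  have hk1 := Shamash.chain (Q ⧸ I) (IsLocalRing.ResidueField (Q ⧸ I)) _ Q (List.ofFn f) rfl hs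
    hker hreg.toIsWeaklyRegular
    (hof.le.trans (hann.trans (Ideal.mul_mono le_rfl (hle.trans hle'))))
  have hk2 : Shamash.PS Q (IsLocalRing.ResidueField (Q ⧸ I)) =
      Shamash.PS Q (IsLocalRing.ResidueField Q) := by
    ext j
    simp only [Shamash.PS, PowerSeries.coeff_mk]
    rw [Shamash.betti_congr e]
  rw [hk2] at hk1
  have hfin : Shamash.PS (Q ⧸ I) M * Shamash.PS Q (IsLocalRing.ResidueField Q) =
      Shamash.PS Q M * Shamash.PS (Q ⧸ I) (IsLocalRing.ResidueField (Q ⧸ I)) := by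
    rw [hM1, hk1]
    ring
  have hc := congrArg (PowerSeries.coeff i) hfin
  rw [PowerSeries.coeff_mul, PowerSeries.coeff_mul,
    Finset.Nat.sum_antidiagonal_eq_sum_range_succ_mk,
    Finset.Nat.sum_antidiagonal_eq_sum_range_succ_mk] at hc
  simp only [Shamash.PS, PowerSeries.coeff_mk] at hc
  exact_mod_cast hc
end
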